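/- arXiv:2212.05455 — 3 statements merged into one kernel-verified Lean document; each statement's English description precedes it below -/
import Mathlib

section
/- Let k ≥ 1 be an integer and let G be a connected graph of order n ≥ 2k + 12. If the signless Laplacian spectral radius satisfies q(G) ≥ q(K₁ ∨ (K_{n−k−2} + (k+1)K₁)), then G has a spanning tree with leaf degree at most k, unless G is isomorphic to K₁ ∨ (K_{n−k−2} + (k+1)K₁). -/
open Finset
open scoped Classical

/-- The adjacency matrix of a simple graph over ℝ. -/
noncomputable def adjMat {V : Type*} [Fintype V] (G : SimpleGraph V) :
    Matrix V V ℝ := fun i j => if G.Adj i j then 1 else 0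

/-- The spectral radius of a graph: the largest (real) eigenvalue of its
adjacency matrix. -/
noncomputable def specRad {V : Type*} [Fintype V] (G : SimpleGraph V) : ℝ :=
  sSup {μ : ℝ | Module.End.HasEigenvalue (Matrix.mulVecLin (adjMat G)) μ}

/-- The signless Laplacian matrix `Q = D + A` of a simple graph. -/
noncomputable def qMat {V : Type*} [Fintype V] (G : SimpleGraph V) :
    Matrix V V ℝ := fun i j =>
  (if i = j then ((univ.filter fun u => G.Adj i u).card : ℝ) else 0) +
    (if G.Adj i j then 1 else 0)

/-- The signless Laplacian spectral radius of a graph: the largest (real)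
eigenvalue of `Q = D + A`. -/
noncomputable def qRad {V : Type*} [Fintype V] (G : SimpleGraph V) : ℝ :=
  sSup {μ : ℝ | Module.End.HasEigenvalue (Matrix.mulVecLin (qMat G)) μ}

/-- `G` has a spanning `k`-ended-tree: a spanning tree with at most `k`
leaves (vertices of degree 1 in the tree). -/
noncomputable def HasSpanningKEndedTree {V : Type*} [Fintype V]
    (G : SimpleGraph V) (k : ℕ) : Prop :=
  ∃ T : SimpleGraph V, T ≤ G ∧ T.IsTree ∧
    (univ.filter fun v => T.degree v = 1).card ≤ k

/-- `G` has a spanning tree with leaf degree at most `k`: every vertex of the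
tree is adjacent (in the tree) to at most `k` leaves of the tree. -/
noncomputable def HasSpanningTreeLeafDegLE {V : Type*} [Fintype V]
    (G : SimpleGraph V) (k : ℕ) : Prop :=
  ∃ T : SimpleGraph V, T ≤ G ∧ T.IsTree ∧
    ∀ v, (univ.filter fun u => T.Adj v u ∧ T.degree u = 1).card ≤ k

/-- The graph `K₁ ∨ (K_{n-k-1} + kK₁)` on `n` vertices: vertex `0` is joined to
everything, vertices `0, …, n-k-1` form a clique `K_{n-k}`, and the last `k`
vertices are only adjacent to vertex `0`. -/
def oneJoinCliquePlusIso (n k : ℕ) : SimpleGraph (Fin n) :=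
  SimpleGraph.fromRel fun i j => i.val = 0 ∨ (i.val < n - k ∧ j.val < n - k)

/-- The graph `K₁ ∨ (K_{n-k-2} + (k+1)K₁)` on `n` vertices: vertex `0` is joined
to everything, vertices `0, …, n-k-2` form a clique `K_{n-k-1}`, and the last
`k+1` vertices are only adjacent to vertex `0`. -/
def oneJoinCliquePlusIso' (n k : ℕ) : SimpleGraph (Fin n) :=
  SimpleGraph.fromRel fun i j =>
    i.val = 0 ∨ (i.val < n - (k + 1) ∧ j.val < n - (k + 1))

namespace Kan

variable {V : Type*} [Fintype V]

/-- Isolated vertices of `G - S`. -/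
noncomputable def iso (G : SimpleGraph V) (S : Finset V) : Finset V :=
  univ.filter fun v => v ∉ S ∧ ∀ u, G.Adj v u → u ∈ S

lemma mem_iso {G : SimpleGraph V} {S : Finset V} {v : V} :
    v ∈ iso G S ↔ v ∉ S ∧ ∀ u, G.Adj v u → u ∈ S := by simp [iso]

/-- The surplus. -/
noncomputable def sf (G : SimpleGraph V) (k : ℕ) (S : Finset V) : ℤ :=
  (k + 1) * (S.card : ℤ) - ((iso G S).card : ℤ)

/-- Kaneko's condition. -/
def Cond (G : SimpleGraph V) (k : ℕ) : Prop :=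
  ∀ S : Finset V, S.Nonempty → 1 ≤ sf G k S

lemma uncross (G : SimpleGraph V) (k : ℕ) (S S' A P P' E : Finset V)
    (hA : A = (S ∪ S') \ (iso G S ∪ iso G S'))
    (hP : P = iso G S ∩ S') (hP' : P' = iso G S' ∩ S)
    (hE : E ⊆ iso G A) (hE1 : Disjoint E (iso G S)) (hE2 : Disjoint E (iso G S')) :
    sf G k A + sf G k (S ∩ S') + k * (P.card + P'.card) + E.card ≤ sf G k S + sf G k S' := by
  have c1 : A.card + P.card + P'.card = (S ∪ S').card := by
    have hd : Disjoint P P' := by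
      rw [Finset.disjoint_left]; intro a ha hb
      subst hP hP'
      simp only [Finset.mem_inter, mem_iso] at ha hb
      exact ha.1.1 hb.2
    have : S ∪ S' = A ∪ (P ∪ P') := by
      ext a
      subst hA hP hP'
      simp only [Finset.mem_union, Finset.mem_sdiff, Finset.mem_inter, mem_iso]
      tauto
    rw [this, Finset.card_union_of_disjoint, Finset.card_union_of_disjoint hd]
    · ring
    · rw [Finset.disjoint_left]; intro a ha hb
      subst hA hP hP'
      simp only [Finset.mem_union, Finset.mem_sdiff, Finset.mem_inter] at ha hb
      tauto
  have c2 := Finset.card_union_add_card_inter S S'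
  have d1 : (iso G S \ S').card + P.card = (iso G S).card := by
    rw [hP]; exact Finset.card_sdiff_add_card_inter _ _
  have d2 : (iso G S' \ S).card + P'.card = (iso G S').card := by
    rw [hP']; exact Finset.card_sdiff_add_card_inter _ _
  have d3 := Finset.card_union_add_card_inter (iso G S \ S') (iso G S' \ S)
  have d4 : ((iso G S \ S') ∪ (iso G S' \ S)).card + E.card ≤ (iso G A).card := by
    rw [← Finset.card_union_of_disjoint]
    · apply Finset.card_le_card
      refine Finset.union_subset (Finset.union_subset ?_ ?_) hE
      · intro v hv
        rw [Finset.mem_sdiff] at hv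
        have hv1 := mem_iso.1 hv.1
        rw [mem_iso]
        refine ⟨?_, fun u hu => ?_⟩
        · rw [hA]; simp [hv.1]
        · rw [hA, Finset.mem_sdiff, Finset.mem_union, Finset.mem_union]
          refine ⟨Or.inl (hv1.2 u hu), ?_⟩
          rintro (h | h)
          · exact (mem_iso.1 h).1 (hv1.2 u hu)
          · exact hv.2 ((mem_iso.1 h).2 v hu.symm)
      · intro v hv
        rw [Finset.mem_sdiff] at hv
        have hv1 := mem_iso.1 hv.1
        rw [mem_iso]
        refine ⟨?_, fun u hu => ?_⟩
        · rw [hA]; simp [hv.1]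
        · rw [hA, Finset.mem_sdiff, Finset.mem_union, Finset.mem_union]
          refine ⟨Or.inr (hv1.2 u hu), ?_⟩
          rintro (h | h)
          · exact hv.2 ((mem_iso.1 h).2 v hu.symm)
          · exact (mem_iso.1 h).1 (hv1.2 u hu)
    · rw [Finset.disjoint_left] at *
      intro a ha hb
      have := hE1 hb
      have := hE2 hb
      simp only [Finset.mem_union, Finset.mem_sdiff] at ha
      tauto
  have d5 : ((iso G S \ S') ∩ (iso G S' \ S)).card ≤ (iso G (S ∩ S')).card := by
    apply Finset.card_le_card
    intro v hv
    simp only [Finset.mem_inter, Finset.mem_sdiff, mem_iso] at hv ⊢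
    refine ⟨fun h => hv.1.2 h.2, fun u hu => ⟨hv.1.1.2 u hu, hv.2.1.2 u hu⟩⟩
  unfold sf
  zify at c1 c2 d1 d2 d3 d4 d5
  have e1 : (S.card : ℤ) + S'.card = A.card + (S ∩ S').card + P.card + P'.card := by linarith
  have e2 : ((iso G S).card : ℤ) + (iso G S').card + E.card ≤ (iso G A).card
      + (iso G (S ∩ S')).card + P.card + P'.card := by linarith
  have e3 : ((k : ℤ) + 1) * ((S.card : ℤ) + S'.card)
    = (k + 1) * (A.card + (S ∩ S').card + P.card + P'.card) := by rw [e1]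
  nlinarith

/-- Every proper nonempty set has an edge leaving it. -/
lemma exists_leave {G : SimpleGraph V} (hG : G.Connected) (X : Finset V) (a : V) (ha : a ∈ X)
    (hX : X.card < Fintype.card V) : ∃ u ∈ X, ∃ v ∉ X, G.Adj u v := by
  obtain ⟨b, hb⟩ : ∃ b, b ∉ X := by
    by_contra! h
    rw [Finset.eq_univ_of_forall h, Finset.card_univ] at hX
    exact lt_irrefl _ hX
  obtain ⟨p⟩ := hG.preconnected a b
  obtain ⟨d, -, h1, h2⟩ := p.exists_boundary_dart (X : Set V) ha hb
  exact ⟨d.fst, h1, d.snd, h2, d.adj⟩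

lemma iso_empty {G : SimpleGraph V} (hG : G.Connected) (hc : 4 ≤ Fintype.card V) :
    iso G ∅ = ∅ := by
  ext a
  simp only [mem_iso, Finset.notMem_empty, iff_false]
  rintro ⟨-, h⟩
  obtain ⟨u, hu, v, -, huv⟩ := exists_leave hG {a} a (by simp) (by simp; omega)
  rw [Finset.mem_singleton] at hu
  subst hu
  exact h v huv

lemma sf_empty {G : SimpleGraph V} (k : ℕ) (hG : G.Connected) (hc : 4 ≤ Fintype.card V) :
    sf G k ∅ = 0 := by simp [sf, iso_empty hG hc]

lemma sf_nonneg {G : SimpleGraph V} {k : ℕ} (hG : G.Connected) (hc : 4 ≤ Fintype.card V)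
    (hC : Cond G k) (S : Finset V) : 0 ≤ sf G k S := by
  rcases S.eq_empty_or_nonempty with h | h
  · rw [h, sf_empty k hG hc]
  · linarith [hC S h]

lemma exists_nbr {G : SimpleGraph V} {k : ℕ} (hk : 1 ≤ k) (hG : G.Connected)
    (hc : 4 ≤ Fintype.card V) (hC : Cond G k) {S : Finset V} {s : V} (hs : s ∈ S)
    (hf : sf G k S ≤ 2) (hne : sf G k S = 1 ∨ S ≠ {s}) :
    ∃ t ∈ iso G S, G.Adj s t := by
  by_contra! hcon
  have hsub : iso G S ⊆ iso G (S.erase s) := by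
    intro v hv
    have hv' := mem_iso.1 hv
    rw [mem_iso]
    refine ⟨fun h => hv'.1 (Finset.mem_of_mem_erase h), fun u hu => ?_⟩
    refine Finset.mem_erase.2 ⟨?_, hv'.2 u hu⟩
    rintro rfl
    exact hcon v hv hu.symm
  have h1 := Finset.card_le_card hsub
  have h2 := Finset.card_erase_add_one hs
  have h3 : sf G k (S.erase s) + (k + 1) ≤ sf G k S := by
    unfold sf
    zify at h1 h2
    rw [← h2]
    nlinarith
  have hk' : (1 : ℤ) ≤ k := by exact_mod_cast hk
  have h5 := sf_nonneg hG hc hC (S.erase s)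
  rcases hne with h | h
  · linarith
  · have : (S.erase s).Nonempty := by
      rw [Finset.nonempty_iff_ne_empty]
      intro h0
      rw [Finset.erase_eq_empty_iff] at h0
      rcases h0 with h0 | h0
      · rw [h0] at hs; simp at hs
      · exact h h0
    linarith [hC _ this]

lemma tight_disj {G : SimpleGraph V} {k : ℕ} (hk : 1 ≤ k) (hG : G.Connected)
    (hc : 4 ≤ Fintype.card V) (hC : Cond G k) {S S' : Finset V}
    (hS : sf G k S = 1) (hS' : sf G k S' = 1) {t : V} (ht : t ∈ iso G S) : t ∉ S' := by
  intro htS'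
  obtain ⟨t', ht', htt'⟩ := exists_nbr hk hG hc hC htS' (by linarith) (Or.inl hS')
  have ht'S : t' ∈ S := (mem_iso.1 ht).2 t' htt'
  have hu := uncross G k S S' _ _ _ ∅ rfl rfl rfl (Finset.empty_subset _)
    (Finset.disjoint_empty_left _) (Finset.disjoint_empty_left _)
  set A := (S ∪ S') \ (iso G S ∪ iso G S') with hA
  set P := iso G S ∩ S' with hP
  set P' := iso G S' ∩ S with hP'
  have tP : t ∈ P := by rw [hP]; simp [ht, htS']
  have tP' : t' ∈ P' := by rw [hP']; simp [ht', ht'S]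
  have p1 : 1 ≤ P.card := Finset.card_pos.2 ⟨t, tP⟩
  have p2 : 1 ≤ P'.card := Finset.card_pos.2 ⟨t', tP'⟩
  have hB := sf_nonneg hG hc hC (S ∩ S')
  have hA0 := sf_nonneg hG hc hC A
  zify at p1 p2 hk
  have hkk : (P.card : ℤ) + P'.card ≤ k * (P.card + P'.card) := by nlinarith
  simp only [Finset.card_empty, Nat.cast_zero, add_zero] at hu
  have hAe : A = ∅ := by
    rw [← Finset.not_nonempty_iff_eq_empty]
    intro h
    linarith [hC A h]
  have q1 : P.card = 1 := by zify; linarith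
  have q2 : P'.card = 1 := by zify; linarith
  have e1 : P = {t} := by
    obtain ⟨a, ha⟩ := Finset.card_eq_one.1 q1
    rw [ha] at tP ⊢; rw [Finset.mem_singleton] at tP; rw [tP]
  have e2 : P' = {t'} := by
    obtain ⟨a, ha⟩ := Finset.card_eq_one.1 q2
    rw [ha] at tP' ⊢; rw [Finset.mem_singleton] at tP'; rw [tP']
  have f1 : ∀ a ∈ S, a = t' := by
    intro a ha
    rw [← Finset.mem_singleton, ← e2, hP']
    by_contra h
    have : a ∈ A := by
      rw [hA]
      simp only [Finset.mem_union, Finset.mem_sdiff, Finset.mem_inter, mem_iso] at h ⊢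
      tauto
    rw [hAe] at this; simp at this
  have f2 : ∀ a ∈ S', a = t := by
    intro a ha
    rw [← Finset.mem_singleton, ← e1, hP]
    by_contra h
    have : a ∈ A := by
      rw [hA]
      simp only [Finset.mem_union, Finset.mem_sdiff, Finset.mem_inter, mem_iso] at h ⊢
      tauto
    rw [hAe] at this; simp at this
  obtain ⟨u, hu, v, hv, huv⟩ := exists_leave hG {t, t'} t (by simp)
    (lt_of_le_of_lt (Finset.card_le_two) (by omega))
  simp only [Finset.mem_insert, Finset.mem_singleton] at hu hv
  rcases hu with rfl | rfl
  · exact hv (Or.inr (f1 v ((mem_iso.1 ht).2 v huv)))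
  · exact hv (Or.inl (f2 v ((mem_iso.1 ht').2 v huv)))

/-- For tight sets, with extra isolated vertices in the union. -/
lemma tight_union {G : SimpleGraph V} {k : ℕ} (hk : 1 ≤ k) (hG : G.Connected)
    (hc : 4 ≤ Fintype.card V) (hC : Cond G k) {S S' : Finset V}
    (hS : sf G k S = 1) (hS' : sf G k S' = 1) (E : Finset V) (hE : E ⊆ iso G (S ∪ S'))
    (hE1 : Disjoint E (iso G S)) (hE2 : Disjoint E (iso G S')) :
    sf G k (S ∪ S') + sf G k (S ∩ S') + E.card ≤ 2 := by
  have hA : S ∪ S' = (S ∪ S') \ (iso G S ∪ iso G S') := by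
    symm
    rw [Finset.sdiff_eq_self_iff_disjoint, Finset.disjoint_left]
    intro a ha hb
    rcases Finset.mem_union.1 ha with ha | ha <;> rcases Finset.mem_union.1 hb with hb | hb
    · exact (mem_iso.1 hb).1 ha
    · exact tight_disj hk hG hc hC hS' hS hb ha
    · exact tight_disj hk hG hc hC hS hS' hb ha
    · exact (mem_iso.1 hb).1 ha
  have := uncross G k S S' (S ∪ S') _ _ E hA rfl rfl hE hE1 hE2
  have h0 : (0 : ℤ) ≤ k * ((iso G S ∩ S').card + (iso G S' ∩ S).card) :=
    mul_nonneg (Int.natCast_nonneg _) (add_nonneg (Int.natCast_nonneg _) (Int.natCast_nonneg _))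
  linarith

/-- The edge `xy` is critical with picked end `x`. -/
def Pick (G : SimpleGraph V) (k : ℕ) (x y : V) (S : Finset V) : Prop :=
  sf G k S = 1 ∧ x ∉ S ∧ y ∉ S ∧ ∀ u, G.Adj x u → u ≠ y → u ∈ S

/-- Second type of criticality. -/
def Pick2 (G : SimpleGraph V) (k : ℕ) (x y : V) (S : Finset V) : Prop :=
  sf G k S = 2 ∧ x ∉ S ∧ y ∉ S ∧ (∀ u, G.Adj x u → u ≠ y → u ∈ S) ∧
    (∀ u, G.Adj y u → u ≠ x → u ∈ S)

lemma pick_of_not_cond {G : SimpleGraph V} {k : ℕ} (hC : Cond G k) {x y : V}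
    (hxy : G.Adj x y) (h : ¬ Cond (G.deleteEdges {s(x, y)}) k) :
    (∃ S, Pick G k x y S) ∨ (∃ S, Pick G k y x S) ∨ (∃ S, Pick2 G k x y S) := by
  unfold Cond at h
  push Not at h
  obtain ⟨S, hS, hf⟩ := h
  have hCS := hC S hS
  set G' := G.deleteEdges {s(x, y)} with hG'
  have hadj : ∀ a b, G'.Adj a b ↔ G.Adj a b ∧ ¬ ((a = x ∧ b = y) ∨ (a = y ∧ b = x)) := by
    intro a b
    rw [hG', SimpleGraph.deleteEdges_adj]; simp
  have hsub : ∀ v ∈ iso G' S, v ≠ x → v ≠ y → v ∈ iso G S := by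
    intro v hv h1 h2
    rw [mem_iso] at hv ⊢
    exact ⟨hv.1, fun u hu => hv.2 u ((hadj _ _).2 ⟨hu, by tauto⟩)⟩
  have hcx : x ∈ iso G' S → ∀ u, G.Adj x u → u ≠ y → u ∈ S := by
    intro hx u hu huy
    exact (mem_iso.1 hx).2 u ((hadj _ _).2 ⟨hu, by have := hxy.ne; tauto⟩)
  have hcy : y ∈ iso G' S → ∀ u, G.Adj y u → u ≠ x → u ∈ S := by
    intro hx u hu huy
    exact (mem_iso.1 hx).2 u ((hadj _ _).2 ⟨hu, by have := hxy.ne; tauto⟩)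
  have key : ∀ X : Finset V, iso G' S ⊆ iso G S ∪ X → sf G k S ≤ X.card := by
    intro X hX
    have h1 := (Finset.card_le_card hX).trans (Finset.card_union_le _ _)
    unfold sf at hf ⊢
    zify at h1
    linarith
  have key0 : ¬ iso G' S ⊆ iso G S := by
    intro h
    have := key ∅ (by simpa using h)
    simp at this
    linarith
  have hxS : x ∉ S := by
    intro hx
    apply key0
    intro v hv
    have hv1 := (mem_iso.1 hv).1
    by_cases hvy : v = y
    · subst hvy
      refine mem_iso.2 ⟨hv1, fun u hu => ?_⟩
      by_cases hux : u = x
      · exact hux ▸ hx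
      · exact hcy hv u hu hux
    · exact hsub v hv (fun h => hv1 (h ▸ hx)) hvy
  have hyS : y ∉ S := by
    intro hy
    apply key0
    intro v hv
    have hv1 := (mem_iso.1 hv).1
    by_cases hvx : v = x
    · subst hvx
      refine mem_iso.2 ⟨hv1, fun u hu => ?_⟩
      by_cases hux : u = y
      · exact hux ▸ hy
      · exact hcx hv u hu hux
    · exact hsub v hv hvx (fun h => hv1 (h ▸ hy))
  by_cases hx : x ∈ iso G' S
  · by_cases hy : y ∈ iso G' S
    · have := key {x, y} (by
        intro v hv
        by_cases h1 : v = x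
        · simp [h1]
        by_cases h2 : v = y
        · simp [h2]
        exact Finset.mem_union_left _ (hsub v hv h1 h2))
      rw [Finset.card_pair hxy.ne] at this
      by_cases h1 : sf G k S = 1
      · exact Or.inl ⟨S, h1, hxS, hyS, hcx hx⟩
      · refine Or.inr (Or.inr ⟨S, ?_, hxS, hyS, hcx hx, hcy hy⟩)
        push_cast at this
        omega
    · have := key {x} (by
        intro v hv
        by_cases h1 : v = x
        · simp [h1]
        exact Finset.mem_union_left _ (hsub v hv h1 (fun h => hy (h ▸ hv))))
      simp at this
      exact Or.inl ⟨S, le_antisymm this hCS, hxS, hyS, hcx hx⟩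
  · have := key {y} (by
        intro v hv
        by_cases h1 : v = y
        · simp [h1]
        exact Finset.mem_union_left _ (hsub v hv (fun h => hx (h ▸ hv)) h1))
    simp at this
    by_cases hy : y ∈ iso G' S
    · exact Or.inr (Or.inl ⟨S, le_antisymm this hCS, hyS, hxS, hcy hy⟩)
    · exact absurd (fun v hv => hsub v hv (fun h => hx (h ▸ hv)) (fun h => hy (h ▸ hv))) key0

lemma reduce2 {G : SimpleGraph V} {k : ℕ} (hk : 1 ≤ k) (hG : G.Connected)
    (hc : 4 ≤ Fintype.card V) (hC : Cond G k) {x y z t t' : V} {S S' : Finset V}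
    (hxy : G.Adj x y) (hzx : G.Adj z x) (hzy : z ≠ y)
    (h2 : Pick2 G k x y S) (hzS' : z ∉ S') (hxS' : x ∉ S')
    (hS' : sf G k S' = 1 ∨ (sf G k S' = 2 ∧ ∀ u, G.Adj x u → u ≠ z → u ∈ S'))
    (ht : t ∈ iso G S) (htS' : t ∈ S') (ht' : t' ∈ iso G S') (ht'S : t' ∈ S) :
    ∃ S, Pick G k x y S := by
  obtain ⟨hf, hxS, hyS, hNx, hNy⟩ := h2
  have hzS : z ∈ S := hNx z hzx.symm hzy
  have hz' : z ∉ iso G S' := fun h => hxS' ((mem_iso.1 h).2 x hzx)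
  have hzi : z ∉ iso G S := fun h => (mem_iso.1 h).1 hzS
  have hxi : x ∉ iso G S := fun h => hyS ((mem_iso.1 h).2 y hxy)
  have hxi' : x ∉ iso G S' := fun h => hzS' ((mem_iso.1 h).2 z hzx.symm)
  set A := (S ∪ S') \ (iso G S ∪ iso G S') with hA
  set P := iso G S ∩ S' with hP
  set P' := iso G S' ∩ S with hP'
  have hzA : z ∈ A := by rw [hA]; simp [hz', hzi, hzS]
  have tP : t ∈ P := by rw [hP]; simp [ht, htS']
  have tP' : t' ∈ P' := by rw [hP']; simp [ht', ht'S]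
  have p1 : 1 ≤ P.card := Finset.card_pos.2 ⟨t, tP⟩
  have p2 : 1 ≤ P'.card := Finset.card_pos.2 ⟨t', tP'⟩
  have hB := sf_nonneg hG hc hC (S ∩ S')
  have hA0 := hC A ⟨z, hzA⟩
  zify at p1 p2 hk
  have hkk : (P.card : ℤ) + P'.card ≤ k * (P.card + P'.card) := by nlinarith
  have hP1 : (P.card : ℤ) ≤ 1 := by
    rcases hS' with hS' | ⟨hS', hNx'⟩
    · have hu := uncross G k S S' A P P' ∅ hA hP hP' (Finset.empty_subset _)
        (Finset.disjoint_empty_left _) (Finset.disjoint_empty_left _)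
      rw [Finset.card_empty, Nat.cast_zero] at hu
      linarith
    · have hyS' : y ∈ S' := hNx' y hxy hzy.symm
      have hxA : x ∈ iso G A := by
        rw [mem_iso]
        refine ⟨by rw [hA]; simp [hxS, hxS'], fun u hu => ?_⟩
        rw [hA, Finset.mem_sdiff, Finset.mem_union, Finset.mem_union]
        refine ⟨?_, ?_⟩
        · by_cases huy : u = y
          · right; rw [huy]; exact hyS'
          · left; exact hNx u hu huy
        · rintro (h | h)
          · exact hxS ((mem_iso.1 h).2 x hu.symm)
          · exact hxS' ((mem_iso.1 h).2 x hu.symm)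
      have hu := uncross G k S S' A P P' {x} hA hP hP' (by simpa using hxA)
        (by simpa using hxi) (by simpa using hxi')
      rw [Finset.card_singleton, Nat.cast_one] at hu
      linarith
  have hsub : iso G S ⊆ iso G (S.erase t') ∪ P := by
    intro v hv
    have hv' := mem_iso.1 hv
    by_cases hvS' : v ∈ S'
    · apply Finset.mem_union_right; rw [hP]; simp [hv, hvS']
    · apply Finset.mem_union_left
      rw [mem_iso]
      refine ⟨fun h => hv'.1 (Finset.mem_of_mem_erase h), fun u hu => ?_⟩
      refine Finset.mem_erase.2 ⟨?_, hv'.2 u hu⟩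
      rintro rfl
      exact hvS' ((mem_iso.1 ht').2 v hu.symm)
  have h1 := (Finset.card_le_card hsub).trans (Finset.card_union_le _ _)
  have h2 := Finset.card_erase_add_one ht'S
  have h3 : sf G k (S.erase t') + k ≤ sf G k S := by
    unfold sf
    zify at h1 h2
    rw [← h2]
    nlinarith
  have hzt : z ≠ t' := fun h => hz' (h ▸ ht')
  have h4 := hC (S.erase t') ⟨z, Finset.mem_erase.2 ⟨hzt, hzS⟩⟩
  refine ⟨S.erase t', by linarith, fun h => hxS (Finset.mem_of_mem_erase h),
    fun h => hyS (Finset.mem_of_mem_erase h), fun u hu huy => ?_⟩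
  refine Finset.mem_erase.2 ⟨?_, hNx u hu huy⟩
  rintro rfl
  exact hxS' ((mem_iso.1 ht').2 x hu.symm)

lemma elim2 {G : SimpleGraph V} {k : ℕ} (hk : 1 ≤ k) (hG : G.Connected)
    (hc : 4 ≤ Fintype.card V) (hC : Cond G k) {x y z w : V} {S : Finset V}
    (hxy : G.Adj x y) (hzx : G.Adj z x) (hzy : z ≠ y) (hyw : G.Adj y w) (hwx : w ≠ x)
    (h2 : Pick2 G k x y S)
    (hcrit : (∃ S, Pick G k x z S) ∨ (∃ S, Pick G k z x S) ∨ (∃ S, Pick2 G k x z S)) :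
    ∃ S, Pick G k x y S := by
  have h2' := h2
  obtain ⟨hf, hxS, hyS, hNx, hNy⟩ := h2'
  have hzS : z ∈ S := hNx z hzx.symm hzy
  have hwS : w ∈ S := hNy w hyw hwx
  -- common argument when `y` has a neighbour isolated in `G - S'`
  have main : ∀ S' : Finset V, z ∉ S' → x ∉ S' →
      (sf G k S' = 1 ∨ (sf G k S' = 2 ∧ ∀ u, G.Adj x u → u ≠ z → u ∈ S')) →
      (∃ t' ∈ iso G S', G.Adj y t') → ∃ S, Pick G k x y S := by
    rintro S' hzS' hxS' hS' ⟨t', ht', hyt'⟩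
    have ht'x : t' ≠ x := by
      rintro rfl
      exact hzS' ((mem_iso.1 ht').2 z hzx.symm)
    have ht'S : t' ∈ S := hNy t' hyt' ht'x
    have ht'z : t' ≠ z := by
      rintro rfl
      exact hxS' ((mem_iso.1 ht').2 x hzx)
    obtain ⟨t, ht, htt⟩ := exists_nbr hk hG hc hC ht'S (by linarith)
      (Or.inr (by
        rintro h; rw [h] at hzS
        exact ht'z (Finset.mem_singleton.1 hzS).symm))
    exact reduce2 hk hG hc hC hxy hzx hzy h2 hzS' hxS' hS' ht ((mem_iso.1 ht').2 t htt) ht' ht'S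
  rcases hcrit with ⟨S', hf', hxS', hzS', hN⟩ | ⟨S', hf', hzS', hxS', hN⟩ |
    ⟨S', hf', hxS', hzS', hN, hN2⟩
  · exact main S' hzS' hxS' (Or.inl hf')
      (exists_nbr hk hG hc hC (hN y hxy hzy.symm) (by linarith) (Or.inl hf'))
  · by_cases hSz : S = {z}
    · have hwz : w = z := by rw [hSz] at hwS; exact Finset.mem_singleton.1 hwS
      subst hwz
      exact main S' hzS' hxS' (Or.inl hf')
        (exists_nbr hk hG hc hC (hN y hyw.symm hxy.symm.ne) (by linarith) (Or.inl hf'))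
    · obtain ⟨t, ht, hzt⟩ := exists_nbr hk hG hc hC hzS (by linarith) (Or.inr hSz)
      have htx : t ≠ x := by
        rintro rfl
        exact hyS ((mem_iso.1 ht).2 y hxy)
      have htS' := hN t hzt htx
      obtain ⟨t', ht', htt'⟩ := exists_nbr hk hG hc hC htS' (by linarith) (Or.inl hf')
      exact reduce2 hk hG hc hC hxy hzx hzy h2 hzS' hxS' (Or.inl hf') ht htS' ht'
        ((mem_iso.1 ht).2 t' htt')
  · have hyS' : y ∈ S' := hN y hxy hzy.symm
    by_cases hSy : S' = {y}
    · exfalso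
      by_cases hSz : S = {z}
      · obtain ⟨u, hu, v, hv, huv⟩ := exists_leave hG {x, y, z} x (by simp)
          (lt_of_le_of_lt (Finset.card_le_three) (by omega))
        simp only [Finset.mem_insert, Finset.mem_singleton, not_or] at hu hv
        rcases hu with rfl | rfl | rfl
        · have := hNx v huv hv.2.1
          rw [hSz] at this
          exact hv.2.2 (Finset.mem_singleton.1 this)
        · have := hNy v huv hv.1
          rw [hSz] at this
          exact hv.2.2 (Finset.mem_singleton.1 this)
        · have := hN2 v huv hv.1
          rw [hSy] at this
          exact hv.2.1 (Finset.mem_singleton.1 this)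
      · obtain ⟨t, ht, hzt⟩ := exists_nbr hk hG hc hC hzS (by linarith) (Or.inr hSz)
        have htx : t ≠ x := by
          rintro rfl
          exact hyS ((mem_iso.1 ht).2 y hxy)
        have htS' := hN2 t hzt htx
        rw [hSy, Finset.mem_singleton] at htS'
        subst htS'
        exact hxS ((mem_iso.1 ht).2 x hxy.symm)
    · exact main S' hzS' hxS' (Or.inr ⟨hf', hN⟩)
        (exists_nbr hk hG hc hC hyS' (by linarith) (Or.inr hSy))

/-- Consecutive edges `zx`, `xy`: if `xy` picks `x` then `zx` cannot pick `z`. -/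
lemma no_consec {G : SimpleGraph V} {k : ℕ} (hk : 1 ≤ k) (hG : G.Connected)
    (hc : 4 ≤ Fintype.card V) (hC : Cond G k) {x y z : V} {S S' : Finset V}
    (hxy : G.Adj x y) (hzx : G.Adj z x) (hzy : z ≠ y)
    (h1 : Pick G k x y S) (h2 : Pick G k z x S') : False := by
  obtain ⟨hf, hxS, hyS, hNx⟩ := h1
  obtain ⟨hf', hzS', hxS', hNz⟩ := h2
  obtain ⟨t, ht, hzt⟩ := exists_nbr hk hG hc hC (hNx z hzx.symm hzy) (by linarith) (Or.inl hf)
  have htx : t ≠ x := by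
    rintro rfl
    exact hyS ((mem_iso.1 ht).2 y hxy)
  exact tight_disj hk hG hc hC hf hf' ht (hNz t hzt htx)

/-- A vertex picked twice is not in any tight set. -/
lemma picked_notMem {G : SimpleGraph V} {k : ℕ} (hk : 1 ≤ k) (hG : G.Connected)
    (hc : 4 ≤ Fintype.card V) (hC : Cond G k) {x y z : V} {S S' B : Finset V}
    (hzy : z ≠ y) (h1 : Pick G k x y S) (h2 : Pick G k x z S') (hB : sf G k B = 1) : x ∉ B := by
  intro hx
  obtain ⟨t, ht, hxt⟩ := exists_nbr hk hG hc hC hx (by linarith) (Or.inl hB)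
  by_cases hty : t = y
  · exact tight_disj hk hG hc hC hB h2.1 ht (h2.2.2.2 t hxt (by rw [hty]; exact hzy.symm))
  · exact tight_disj hk hG hc hC hB h1.1 ht (h1.2.2.2 t hxt hty)

lemma picked_nbrs {G : SimpleGraph V} {k : ℕ} (hk : 1 ≤ k) (hG : G.Connected)
    (hc : 4 ≤ Fintype.card V) (hC : Cond G k) {x y z : V} {S S' : Finset V}
    (hxy : G.Adj x y) (hxz : G.Adj x z) (hzy : z ≠ y)
    (h1 : Pick G k x y S) (h2 : Pick G k x z S') : ∀ u, G.Adj x u → u = y ∨ u = z := by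
  intro u hu
  by_contra! hcon
  have hyS' : y ∈ S' := h2.2.2.2 y hxy hzy.symm
  have hzS : z ∈ S := h1.2.2.2 z hxz hzy
  have := tight_union hk hG hc hC h1.1 h2.1 {x} (by
    rw [Finset.singleton_subset_iff, mem_iso]
    refine ⟨by simp [h1.2.1, h2.2.1], fun v hv => ?_⟩
    rw [Finset.mem_union]
    by_cases hvy : v = y
    · right; rw [hvy]; exact hyS'
    · left; exact h1.2.2.2 v hv hvy)
    (by
      rw [Finset.disjoint_singleton_left]
      exact fun h => h1.2.2.1 ((mem_iso.1 h).2 y hxy))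
    (by
      rw [Finset.disjoint_singleton_left]
      exact fun h => h2.2.2.1 ((mem_iso.1 h).2 z hxz))
  have e1 := hC (S ∪ S') ⟨z, Finset.mem_union_left _ hzS⟩
  have e2 := hC (S ∩ S') ⟨u, Finset.mem_inter.2
    ⟨h1.2.2.2 u hu hcon.1, h2.2.2.2 u hu hcon.2⟩⟩
  rw [Finset.card_singleton, Nat.cast_one] at this
  linarith

/-- `xy` is an edge on a cycle. -/
def OnCyc (G : SimpleGraph V) (x y : V) : Prop :=
  ∃ (v : V) (c : G.Walk v v), c.IsCycle ∧ s(x, y) ∈ c.edges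

lemma OnCyc.symm {G : SimpleGraph V} {x y : V} (h : OnCyc G x y) : OnCyc G y x := by
  obtain ⟨v, c, hc, he⟩ := h
  exact ⟨v, c, hc, by rwa [Sym2.eq_swap]⟩

lemma OnCyc.adj {G : SimpleGraph V} {x y : V} (h : OnCyc G x y) : G.Adj x y := by
  obtain ⟨v, c, hc, he⟩ := h
  exact c.adj_of_mem_edges he

lemma OnCyc.exists_cycle {G : SimpleGraph V} {x y : V} (h : OnCyc G x y) :
    ∃ c : G.Walk x x, c.IsCycle := by
  obtain ⟨v, c, hc, he⟩ := h
  have hx : x ∈ c.support := c.fst_mem_support_of_mem_edges he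
  exact ⟨c.rotate x hx, (SimpleGraph.Walk.isCycle_rotate hx).2 hc⟩

lemma onCyc_snd {G : SimpleGraph V} {x : V} {c : G.Walk x x} (hc : c.IsCycle) :
    OnCyc G x c.snd :=
  ⟨x, c, hc, SimpleGraph.Walk.mk_start_snd_mem_edges hc.not_nil⟩

lemma onCyc_pen {G : SimpleGraph V} {x : V} {c : G.Walk x x} (hc : c.IsCycle) :
    OnCyc G x c.penultimate :=
  OnCyc.symm ⟨x, c, hc, SimpleGraph.Walk.mk_penultimate_end_mem_edges hc.not_nil⟩

lemma OnCyc.other {G : SimpleGraph V} {x y : V} (h : OnCyc G x y) :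
    ∃ z, z ≠ y ∧ OnCyc G x z := by
  obtain ⟨c, hc⟩ := h.exists_cycle
  by_cases h1 : c.snd = y
  · exact ⟨c.penultimate, by rw [← h1]; exact hc.snd_ne_penultimate.symm, onCyc_pen hc⟩
  · exact ⟨c.snd, h1, onCyc_snd hc⟩

theorem acyclic_of_critical {G : SimpleGraph V} {k : ℕ} (hk : 1 ≤ k) (hG : G.Connected)
    (hc : 4 ≤ Fintype.card V) (hC : Cond G k)
    (hcr : ∀ x y, OnCyc G x y → ¬ Cond (G.deleteEdges {s(x, y)}) k) : G.IsAcyclic := by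
  have crit : ∀ x y, OnCyc G x y →
      (∃ S, Pick G k x y S) ∨ (∃ S, Pick G k y x S) ∨ (∃ S, Pick2 G k x y S) :=
    fun x y h => pick_of_not_cond hC h.adj (hcr x y h)
  have pick : ∀ x y, OnCyc G x y → (∃ S, Pick G k x y S) ∨ (∃ S, Pick G k y x S) := by
    intro x y h
    rcases crit x y h with h1 | h1 | ⟨S, h1⟩
    · exact Or.inl h1
    · exact Or.inr h1
    · obtain ⟨z, hzy, hz⟩ := h.other
      obtain ⟨w, hwx, hw⟩ := h.symm.other
      exact Or.inl (elim2 hk hG hc hC h.adj hz.adj.symm hzy hw.adj hwx h1 (crit x z hz))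
  have pick' : ∀ x y z, OnCyc G x y → OnCyc G x z → (∃ S, Pick G k x y S) →
      ∃ S, Pick G k x z S := by
    intro x y z hy hz h
    by_cases hzy : z = y
    · rwa [hzy]
    · obtain ⟨S, hS⟩ := h
      rcases pick x z hz with h1 | ⟨S', hS'⟩
      · exact h1
      · exact (no_consec hk hG hc hC hy.adj hz.adj.symm hzy hS hS').elim
  -- main contradiction
  have main : ∀ x y, OnCyc G x y → (∃ S, Pick G k x y S) → False := by
    intro x y0 h0 hp0
    obtain ⟨c, hcyc⟩ := h0.exists_cycle
    set z := c.snd with hz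
    set y := c.penultimate with hy
    have hzy : z ≠ y := hcyc.snd_ne_penultimate
    have oz : OnCyc G x z := onCyc_snd hcyc
    have oy : OnCyc G x y := onCyc_pen hcyc
    obtain ⟨Sy, hSy⟩ := pick' x y0 y h0 oy hp0
    obtain ⟨Sz, hSz⟩ := pick' x y0 z h0 oz hp0
    have hNx := picked_nbrs hk hG hc hC oy.adj oz.adj hzy hSy hSz
    obtain ⟨B, hB⟩ : ∃ B, Maximal (fun B : Finset V => sf G k B = 1 ∧ z ∈ B ∧ y ∉ B) B := by
      apply exists_maximal_of_wellFoundedGT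
      exact ⟨Sy, hSy.1, hSy.2.2.2 z oz.adj hzy, hSy.2.2.1⟩
    obtain ⟨hBf, hzB, hyB⟩ := hB.prop
    have hxB : x ∉ B := picked_notMem hk hG hc hC hzy hSy hSz hBf
    have hxi : x ∉ iso G B := fun h => hyB ((mem_iso.1 h).2 y oy.adj)
    have hyi : y ∉ iso G B := fun h => hxB ((mem_iso.1 h).2 x oy.adj.symm)
    obtain ⟨d, hd, hd1, hd2⟩ := c.tail.exists_boundary_dart ((B ∪ iso G B : Finset V) : Set V)
      (by simp [← hz, hzB]) (by simp [hxB, hxi])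
    rw [Finset.mem_coe, Finset.mem_union] at hd1 hd2
    push Not at hd2
    have hce : c.edges = s(x, z) :: c.tail.edges := by
      conv_lhs => rw [← SimpleGraph.Walk.cons_tail_eq c hcyc.not_nil]
      rfl
    have hde : s(d.fst, d.snd) ∈ c.tail.edges := by
      rw [SimpleGraph.Walk.edges]
      exact List.mem_map.2 ⟨d, hd, rfl⟩
    set b := d.fst with hb
    set u := d.snd with hu
    have hbB : b ∈ B := by
      rcases hd1 with h | h
      · exact h
      · exact absurd ((mem_iso.1 h).2 u d.adj) hd2.1
    have hux : u ≠ x := by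
      intro h
      rcases hNx b (by rw [← h]; exact d.adj.symm) with h1 | h1
      · exact hyB (h1 ▸ hbB)
      · have hnd := hcyc.isTrail.edges_nodup
        rw [hce, List.nodup_cons] at hnd
        apply hnd.1
        rw [h, h1, Sym2.eq_swap] at hde
        exact hde
    have oub : OnCyc G b u := ⟨x, c, hcyc, by rw [hce]; exact List.mem_cons_of_mem _ hde⟩
    have oub' := oub.symm
    -- `u` is picked
    have hpu : ∃ S, Pick G k u b S := by
      rcases pick u b oub' with h | ⟨S1, hS1⟩
      · exact h
      · exfalso
        obtain ⟨a, hau, oa⟩ := oub.other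
        obtain ⟨S2, hS2⟩ := pick' b u a oub oa ⟨S1, hS1⟩
        exact picked_notMem hk hG hc hC hau hS1 hS2 hBf hbB
    obtain ⟨B2, hB2⟩ := hpu
    obtain ⟨b2, hb2b, ob2⟩ := oub'.other
    obtain ⟨B3, hB3⟩ := pick' u b b2 oub' ob2 ⟨B2, hB2⟩
    have hNu := picked_nbrs hk hG hc hC oub'.adj ob2.adj hb2b hB2 hB3
    have hb2B2 : b2 ∈ B2 := hB2.2.2.2 b2 ob2.adj hb2b
    have hb2B : b2 ∉ B := by
      intro h
      apply hd2.2
      rw [mem_iso]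
      refine ⟨hd2.1, fun v hv => ?_⟩
      rcases hNu v hv with rfl | rfl
      · exact hbB
      · exact h
    have hui : u ∈ iso G (B ∪ B2) := by
      rw [mem_iso]
      refine ⟨by simp [hd2.1, hB2.2.1], fun v hv => ?_⟩
      rw [Finset.mem_union]
      rcases hNu v hv with rfl | rfl
      · exact Or.inl hbB
      · exact Or.inr hb2B2
    have hui2 : u ∉ iso G B2 := fun h => hB2.2.2.1 ((mem_iso.1 h).2 b oub'.adj)
    have ht := tight_union hk hG hc hC hBf hB2.1 {u} (by simpa using hui)
      (by simpa using hd2.2) (by simpa using hui2)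
    rw [Finset.card_singleton, Nat.cast_one] at ht
    have hU1 := hC (B ∪ B2) ⟨b, Finset.mem_union_left _ hbB⟩
    have hI0 := sf_nonneg hG hc hC (B ∩ B2)
    have hdisj : ∀ v ∈ B, v ∉ B2 := by
      intro v hv hv2
      linarith [hC (B ∩ B2) ⟨v, Finset.mem_inter.2 ⟨hv, hv2⟩⟩]
    have hU : sf G k (B ∪ B2) = 1 := by linarith
    by_cases hyB2 : y ∈ B2
    · have hxi2 : x ∉ iso G B2 := fun h => hdisj z hzB ((mem_iso.1 h).2 z oz.adj)
      have hxB2 : x ∉ B2 := picked_notMem hk hG hc hC hzy hSy hSz hB2.1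
      have hxi3 : x ∈ iso G (B ∪ B2) := by
        rw [mem_iso]
        refine ⟨by simp [hxB, hxB2], fun v hv => ?_⟩
        rw [Finset.mem_union]
        rcases hNx v hv with h | h
        · right; rw [h]; exact hyB2
        · left; rw [h]; exact hzB
      have ht2 := tight_union hk hG hc hC hBf hB2.1 {u, x} (by
          intro v hv
          simp only [Finset.mem_insert, Finset.mem_singleton] at hv
          rcases hv with rfl | rfl
          · exact hui
          · exact hxi3)
        (by
          rw [Finset.disjoint_left]
          intro v hv
          simp only [Finset.mem_insert, Finset.mem_singleton] at hv
          rcases hv with rfl | rfl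
          · exact hd2.2
          · exact hxi)
        (by
          rw [Finset.disjoint_left]
          intro v hv
          simp only [Finset.mem_insert, Finset.mem_singleton] at hv
          rcases hv with rfl | rfl
          · exact hui2
          · exact hxi2)
      rw [Finset.card_pair hux] at ht2
      push_cast at ht2
      linarith
    · have := hB.le_of_ge (y := B ∪ B2)
        ⟨hU, Finset.mem_union_left _ hzB, by simp [hyB, hyB2]⟩ Finset.subset_union_left
      exact hb2B (this (Finset.mem_union_right _ hb2B2))
  intro v c hcyc
  have o := onCyc_snd hcyc
  rcases pick _ _ o with h | h
  · exact main _ _ o h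
  · exact main _ _ o.symm h

theorem kaneko {G : SimpleGraph V} {k : ℕ} (hk : 1 ≤ k) (hG : G.Connected)
    (hc : 4 ≤ Fintype.card V) (hC : Cond G k) : HasSpanningTreeLeafDegLE G k := by
  obtain ⟨H, hHG, hH⟩ := exists_minimal_le_of_wellFoundedLT
    (fun H : SimpleGraph V => H.Connected ∧ Cond H k) G ⟨hG, hC⟩
  obtain ⟨hHc, hHC⟩ := hH.prop
  refine ⟨H, hHG, ⟨hHc, acyclic_of_critical hk hHc hc hHC ?_⟩, fun v => ?_⟩
  · intro x y hxy hcon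
    have hb : ¬ H.IsBridge s(x, y) := by
      intro hb
      obtain ⟨v, c, hcyc, he⟩ := hxy
      exact (SimpleGraph.isBridge_iff_forall_cycle_notMem
        (c.edges_subset_edgeSet he)).1 hb c hcyc he
    have hle := hH.le_of_le ⟨hHc.connected_delete_edge_of_not_isBridge hb, hcon⟩
      (SimpleGraph.deleteEdges_le _)
    have := hle hxy.adj
    simp at this
  · have h1 := hHC {v} (by simp)
    have h2 : (univ.filter fun u => H.Adj v u ∧ H.degree u = 1) ⊆ iso H {v} := by
      intro u hu
      rw [Finset.mem_filter] at hu
      rw [mem_iso, Finset.mem_singleton]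
      refine ⟨hu.2.1.ne', fun w hw => ?_⟩
      rw [Finset.mem_singleton]
      obtain ⟨a, ha⟩ := Finset.card_eq_one.1 hu.2.2
      have e1 : w ∈ H.neighborFinset u := by simpa using hw
      have e2 : v ∈ H.neighborFinset u := by simpa using hu.2.1.symm
      rw [ha, Finset.mem_singleton] at e1 e2
      rw [e1, e2]
    have h3 := Finset.card_le_card h2
    unfold sf at h1
    rw [Finset.card_singleton] at h1
    zify at h3 ⊢
    push_cast at h1
    linarith

end Kan

namespace QS

variable {V : Type*} [Fintype V]

/-- The degree as a real number. -/
noncomputable def dg (G : SimpleGraph V) (i : V) : ℝ :=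
  ((univ.filter fun u => G.Adj i u).card : ℝ)

lemma dg_eq_sum (G : SimpleGraph V) (i : V) : dg G i = ∑ j, if G.Adj i j then (1 : ℝ) else 0 := by
  unfold dg
  rw [Finset.card_filter]
  push_cast
  rfl

lemma qMat_mulVec (G : SimpleGraph V) (x : V → ℝ) (i : V) :
    (qMat G).mulVec x i = dg G i * x i + ∑ j, if G.Adj i j then x j else 0 := by
  unfold Matrix.mulVec dotProduct qMat
  simp only [add_mul, Finset.sum_add_distrib, ite_mul, zero_mul, one_mul]
  congr 1
  rw [Finset.sum_ite_eq]
  simp [dg]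

lemma qMat_herm (G : SimpleGraph V) : (qMat G).IsHermitian := by
  ext i j
  simp only [Matrix.conjTranspose_apply, qMat, star_trivial]
  by_cases h : i = j
  · subst h; rfl
  · simp [h, Ne.symm h, G.adj_comm]

lemma quad (G : SimpleGraph V) (x : V → ℝ) :
    2 * dotProduct x ((qMat G).mulVec x) =
      ∑ i, ∑ j, if G.Adj i j then (x i + x j) ^ 2 else 0 := by
  have e1 : dotProduct x ((qMat G).mulVec x) =
      ∑ i, ∑ j, if G.Adj i j then (x i ^ 2 + x i * x j) else 0 := by
    unfold dotProduct
    refine Finset.sum_congr rfl fun i _ => ?_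
    rw [qMat_mulVec, dg_eq_sum, Finset.sum_mul, ← Finset.sum_add_distrib, Finset.mul_sum]
    refine Finset.sum_congr rfl fun j _ => ?_
    split_ifs <;> ring
  have e2 : dotProduct x ((qMat G).mulVec x) =
      ∑ i, ∑ j, if G.Adj i j then (x j ^ 2 + x i * x j) else 0 := by
    rw [e1, Finset.sum_comm]
    refine Finset.sum_congr rfl fun i _ => Finset.sum_congr rfl fun j _ => ?_
    rw [G.adj_comm]
    split_ifs <;> ring
  rw [two_mul]
  nth_rewrite 1 [e1]
  rw [e2, ← Finset.sum_add_distrib]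
  refine Finset.sum_congr rfl fun i _ => ?_
  rw [← Finset.sum_add_distrib]
  refine Finset.sum_congr rfl fun j _ => ?_
  split_ifs <;> ring

lemma eig_finite (G : SimpleGraph V) :
    {μ : ℝ | Module.End.HasEigenvalue (Matrix.mulVecLin (qMat G)) μ}.Finite :=
  Module.End.finite_hasEigenvalue _

lemma eig_iff (M : Matrix V V ℝ) (μ : ℝ) :
    Module.End.HasEigenvalue (Matrix.mulVecLin M) μ ↔ ∃ x : V → ℝ, x ≠ 0 ∧ M.mulVec x = μ • x := by
  constructor
  · intro h
    obtain ⟨x, hx⟩ := h.exists_hasEigenvector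
    exact ⟨x, hx.2, by simpa using hx.apply_eq_smul⟩
  · rintro ⟨x, hx, h⟩
    exact Module.End.hasEigenvalue_of_hasEigenvector
      (x := x) ⟨Module.End.mem_eigenspace_iff.2 (by simpa using h), hx⟩

lemma herm_eig {M : Matrix V V ℝ} (hM : M.IsHermitian) (i : V) :
    Module.End.HasEigenvalue (Matrix.mulVecLin M) (hM.eigenvalues i) := by
  rw [eig_iff]
  refine ⟨hM.eigenvectorBasis i, ?_, hM.mulVec_eigenvectorBasis i⟩
  intro h
  have := hM.eigenvectorBasis.orthonormal.ne_zero i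
  apply this
  ext j
  exact congrFun h j

lemma qRad_eig [Nonempty V] (G : SimpleGraph V) :
    ∃ x : V → ℝ, x ≠ 0 ∧ (qMat G).mulVec x = qRad G • x := by
  rw [← eig_iff]
  have hne : {μ : ℝ | Module.End.HasEigenvalue (Matrix.mulVecLin (qMat G)) μ}.Nonempty :=
    ⟨_, herm_eig (qMat_herm G) (Classical.arbitrary V)⟩
  exact hne.csSup_mem (eig_finite G)

lemma psd (G : SimpleGraph V) : (qRad G • (1 : Matrix V V ℝ) - qMat G).PosSemidef := by
  have hH : (qRad G • (1 : Matrix V V ℝ) - qMat G).IsHermitian := by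
    refine Matrix.IsHermitian.sub ?_ (qMat_herm G)
    rw [Matrix.IsHermitian, Matrix.conjTranspose_smul, Matrix.conjTranspose_one]
    simp
  rw [hH.posSemidef_iff_eigenvalues_nonneg]
  intro i
  obtain ⟨x, hx, hx2⟩ := (eig_iff _ _).1 (herm_eig hH i)
  have : Module.End.HasEigenvalue (Matrix.mulVecLin (qMat G)) (qRad G - hH.eigenvalues i) := by
    rw [eig_iff]
    refine ⟨x, hx, ?_⟩
    rw [Matrix.sub_mulVec, Matrix.smul_mulVec, Matrix.one_mulVec] at hx2
    rw [sub_smul, ← hx2]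
    abel
  have h2 := le_csSup (eig_finite G).bddAbove this
  change _ ≤ qRad G at h2
  simp only [Pi.zero_apply]
  linarith

lemma psd_apply (G : SimpleGraph V) (x : V → ℝ) :
    dotProduct x ((qRad G • (1 : Matrix V V ℝ) - qMat G).mulVec x)
      = qRad G * dotProduct x x - dotProduct x ((qMat G).mulVec x) := by
  rw [Matrix.sub_mulVec, Matrix.smul_mulVec, Matrix.one_mulVec, dotProduct_sub, dotProduct_smul]
  rfl

lemma rayleigh (G : SimpleGraph V) (x : V → ℝ) :
    dotProduct x ((qMat G).mulVec x) ≤ qRad G * dotProduct x x := by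
  have h := (psd G).dotProduct_mulVec_nonneg x
  rw [star_trivial, psd_apply] at h
  linarith

lemma rayleigh_eq (G : SimpleGraph V) (x : V → ℝ)
    (h : dotProduct x ((qMat G).mulVec x) = qRad G * dotProduct x x) :
    (qMat G).mulVec x = qRad G • x := by
  have h1 := ((psd G).dotProduct_mulVec_zero_iff x).1 (by
    rw [star_trivial, psd_apply, h, sub_self])
  rw [Matrix.sub_mulVec, Matrix.smul_mulVec, Matrix.one_mulVec, sub_eq_zero] at h1
  exact h1.symm

/-- Feng–Yu type bound. -/
lemma feng_yu {G : SimpleGraph V} (hG : G.Connected) (hc : 4 ≤ Fintype.card V) :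
    qRad G * ((Fintype.card V : ℝ) - 1) ≤
      (∑ i, dg G i) + ((Fintype.card V : ℝ) - 1) * ((Fintype.card V : ℝ) - 2) := by
  have : Nonempty V := hG.nonempty
  obtain ⟨x, hx, hq⟩ := qRad_eig G
  set q := qRad G
  set n : ℝ := (Fintype.card V : ℝ) with hn
  have hn4 : (4 : ℝ) ≤ n := by rw [hn]; exact_mod_cast hc
  have d1 : ∀ i, 1 ≤ dg G i := by
    intro i
    obtain ⟨u, hu, v, hv, huv⟩ := Kan.exists_leave hG {i} i (by simp) (by simp; omega)
    rw [Finset.mem_singleton] at hu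
    subst hu
    unfold dg
    have : 1 ≤ (univ.filter fun w => G.Adj u w).card := Finset.card_pos.2 ⟨v, by simpa using huv⟩
    exact_mod_cast this
  have d2 : ∀ i, dg G i ≤ n - 1 := by
    intro i
    have h1 : (univ.filter fun w => G.Adj i w) ⊆ univ.erase i := by
      intro w hw
      simp at hw ⊢
      exact hw.ne'
    have h2 := Finset.card_le_card h1
    have h3 := Finset.card_erase_add_one (Finset.mem_univ i)
    rw [Finset.card_univ] at h3
    have h4 : (univ.filter fun w => G.Adj i w).card + 1 ≤ Fintype.card V := by omega
    unfold dg
    have : ((univ.filter fun w => G.Adj i w).card : ℝ) + 1 ≤ n := by rw [hn]; exact_mod_cast h4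
    linarith
  obtain ⟨v, -, hv⟩ := Finset.exists_max_image univ (fun i => |x i| / dg G i) Finset.univ_nonempty
  have hv' : ∀ i, |x i| ≤ |x v| / dg G v * dg G i := by
    intro i
    have := hv i (Finset.mem_univ i)
    rwa [div_le_iff₀ (by linarith [d1 i])] at this
  have hxv : 0 < |x v| := by
    rw [abs_pos]
    intro h0
    apply hx
    ext i
    have := hv' i
    rw [h0] at this
    simpa using this
  set d := dg G v with hd
  set R := ∑ j, if G.Adj v j then dg G j else 0 with hR
  have hd1 : 1 ≤ d := d1 v
  have hdn : d ≤ n - 1 := d2 v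
  have hqd : q * d ≤ d ^ 2 + R := by
    have h1 := congrFun hq v
    rw [qMat_mulVec, Pi.smul_apply, smul_eq_mul] at h1
    have h2 : |∑ j, if G.Adj v j then x j else 0| ≤ |x v| / d * R := by
      refine (Finset.abs_sum_le_sum_abs _ _).trans ?_
      rw [hR, Finset.mul_sum]
      refine Finset.sum_le_sum fun j _ => ?_
      split_ifs
      · exact hv' j
      · simp
    have h3 : (q - d) * x v = ∑ j, if G.Adj v j then x j else 0 := by linarith
    rw [← h3, abs_mul] at h2
    have h4 : (q - d) * |x v| ≤ |x v| / d * R :=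
      (mul_le_mul_of_nonneg_right (le_abs_self _) hxv.le).trans h2
    have h5 : |x v| / d * R = (R / d) * |x v| := by ring
    rw [h5] at h4
    have h6 := le_of_mul_le_mul_right h4 hxv
    rw [le_div_iff₀ (by linarith)] at h6
    nlinarith
  have hR1 : R ≤ d * (n - 1) := by
    rw [hR, hd, dg_eq_sum, Finset.sum_mul]
    refine Finset.sum_le_sum fun j _ => ?_
    split_ifs
    · simpa using d2 j
    · simp
  set D := ∑ i, dg G i with hD
  have hR2 : R ≤ D - (n - 1) := by
    have h1 : ∀ j, (if G.Adj v j then dg G j else 0) ≤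
        dg G j - 1 + (if G.Adj v j then 1 else 0) - (if j = v then dg G j - 1 else 0) := by
      intro j
      by_cases hj : j = v
      · subst hj; simp
      · have := d1 j
        simp only [hj, if_false]
        split_ifs <;> linarith
    have h2 := Finset.sum_le_sum (fun j (_ : j ∈ univ) => h1 j)
    rw [Finset.sum_sub_distrib, Finset.sum_add_distrib, Finset.sum_sub_distrib, ← dg_eq_sum,
      Finset.sum_ite_eq' univ v] at h2
    simp only [Finset.mem_univ, if_true, Finset.sum_const, Finset.card_univ, nsmul_eq_mul,
      mul_one] at h2
    linarith
  obtain ⟨a, ha⟩ : ∃ a, a * (n - 1) = D - (n - 1) :=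
    ⟨(D - (n - 1)) / (n - 1), div_mul_cancel₀ _ (by linarith)⟩
  have hfin : q ≤ a + (n - 1) := by
    by_cases hda : d ≤ a
    · have : q * d ≤ (d + (n - 1)) * d := by nlinarith
      have := le_of_mul_le_mul_right this (by linarith)
      linarith
    · push Not at hda
      have : q * d ≤ (a + (n - 1)) * d := by nlinarith
      exact le_of_mul_le_mul_right this (by linarith)
  have : q * (n - 1) ≤ (a + (n - 1)) * (n - 1) := mul_le_mul_of_nonneg_right hfin (by linarith)
  nlinarith

/-- Strict monotonicity against a graph with a dominating vertex. -/
lemma strict_mono [Nonempty V] {G H : SimpleGraph V} (σ : V ≃ V) (o : V) (ho : ∀ v, v ≠ o → H.Adj o v)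
    (hGH : ∀ i j, G.Adj i j → H.Adj (σ i) (σ j)) (hq : qRad H ≤ qRad G) :
    ∀ i j, H.Adj (σ i) (σ j) → G.Adj i j := by
  intro i0 j0 hH0
  by_contra hG0
  obtain ⟨x, hx, hqx⟩ := qRad_eig G
  set y : V → ℝ := fun v => |x (σ.symm v)| with hy
  have e1 : 2 * (qRad G * dotProduct x x) = ∑ i, ∑ j, if G.Adj i j then (x i + x j) ^ 2 else 0 := by
    rw [← quad, hqx, dotProduct_smul, smul_eq_mul]
  have e2 : 2 * dotProduct y ((qMat H).mulVec y) =
      ∑ i, ∑ j, if H.Adj (σ i) (σ j) then (|x i| + |x j|) ^ 2 else 0 := by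
    rw [quad, ← Equiv.sum_comp σ]
    refine Finset.sum_congr rfl fun i _ => ?_
    rw [← Equiv.sum_comp σ]
    simp [hy]
  have e3 : dotProduct y y = dotProduct x x := by
    unfold dotProduct
    rw [← Equiv.sum_comp σ]
    simp [hy]
  have t : ∀ i j, (if G.Adj i j then (x i + x j) ^ 2 else 0) ≤
      (if H.Adj (σ i) (σ j) then (|x i| + |x j|) ^ 2 else 0) := by
    intro i j
    by_cases h : G.Adj i j
    · rw [if_pos h, if_pos (hGH i j h), ← sq_abs (x i + x j)]
      exact pow_le_pow_left₀ (abs_nonneg _) (abs_add_le _ _) 2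
    · rw [if_neg h]; split_ifs <;> positivity
  have t1 := fun i => Finset.sum_le_sum (fun j (_ : j ∈ univ) => t i j)
  have t2 := Finset.sum_le_sum (fun i (_ : i ∈ univ) => t1 i)
  have r := rayleigh H y
  have xx : 0 ≤ dotProduct x x := by
    unfold dotProduct; exact Finset.sum_nonneg fun i _ => mul_self_nonneg _
  have r2 : qRad H * dotProduct x x ≤ qRad G * dotProduct x x := mul_le_mul_of_nonneg_right hq xx
  rw [e3] at r
  have eqr : dotProduct y ((qMat H).mulVec y) = qRad H * dotProduct y y := by
    rw [e3]; linarith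
  have hyq := rayleigh_eq H y eqr
  have eqs := le_antisymm t2 (by linarith)
  have eqi := (Finset.sum_eq_sum_iff_of_le (fun i _ => t1 i)).1 eqs i0 (Finset.mem_univ _)
  have eqj := (Finset.sum_eq_sum_iff_of_le (fun j _ => t i0 j)).1 eqi j0 (Finset.mem_univ _)
  rw [if_neg hG0, if_pos hH0] at eqj
  have hx0 : |x i0| = 0 := by
    have := abs_nonneg (x i0)
    have := abs_nonneg (x j0)
    nlinarith [pow_eq_zero_iff (two_ne_zero) |>.1 eqj.symm]
  have hy0 : ∀ v, 0 ≤ y v := fun v => abs_nonneg _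
  have prop : ∀ a, y a = 0 → ∀ b, H.Adj a b → y b = 0 := by
    intro a ha b hab
    have h1 := congrFun hyq a
    rw [qMat_mulVec, Pi.smul_apply, ha, mul_zero, smul_zero, zero_add] at h1
    have h2 := (Finset.sum_eq_zero_iff_of_nonneg (fun j _ => by
      split_ifs
      · exact hy0 j
      · exact le_rfl)).1 h1 b (Finset.mem_univ _)
    rwa [if_pos hab] at h2
  have hyi : y (σ i0) = 0 := by simp [hy, hx0]
  have hyo : y o = 0 := by
    by_cases h : σ i0 = o
    · rw [← h]; exact hyi
    · exact prop _ hyi _ (ho _ h).symm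
  apply hx
  ext i
  have : y (σ i) = 0 := by
    by_cases h : σ i = o
    · rw [h]; exact hyo
    · exact prop _ hyo _ (ho _ h)
  simpa [hy] using this

end QS

namespace Fin1

lemma adj_iff {n k : ℕ} (a b : Fin n) : (oneJoinCliquePlusIso' n k).Adj a b ↔
    a ≠ b ∧ (a.val = 0 ∨ b.val = 0 ∨ (a.val < n - (k + 1) ∧ b.val < n - (k + 1))) := by
  unfold oneJoinCliquePlusIso'
  rw [SimpleGraph.fromRel_adj]
  tauto

lemma lower {n k : ℕ} (hn : 2 * k + 12 ≤ n) :
    2 * ((n : ℝ) - k - 2) ≤ qRad (oneJoinCliquePlusIso' n k) := by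
  set H := oneJoinCliquePlusIso' n k with hH
  let y : Fin n → ℝ := fun i => if i.val < n - (k + 1) then 1 else 0
  have hsum : ∑ i, y i = (n : ℝ) - k - 1 := by
    have h1 : (∑ i : Fin n, y i) = ∑ i ∈ Finset.range n, (if i < n - (k + 1) then (1 : ℝ) else 0) :=
      Fin.sum_univ_eq_sum_range (fun i => if i < n - (k + 1) then (1 : ℝ) else 0) n
    rw [h1, ← Finset.sum_filter]
    have h2 : (Finset.range n).filter (fun i => i < n - (k + 1)) = Finset.range (n - (k + 1)) := by
      ext i
      simp only [Finset.mem_filter, Finset.mem_range]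
      omega
    rw [h2]
    simp only [Finset.sum_const, Finset.card_range, nsmul_eq_mul, mul_one]
    rw [Nat.cast_sub (by omega)]
    push_cast
    ring
  have hyy : dotProduct y y = (n : ℝ) - k - 1 := by
    rw [← hsum]
    unfold dotProduct
    refine Finset.sum_congr rfl fun i _ => ?_
    simp only [y]
    split_ifs <;> norm_num
  have hq := QS.quad H y
  have hr := QS.rayleigh H y
  have hlow : 4 * ((n : ℝ) - k - 1) ^ 2 - 4 * ((n : ℝ) - k - 1) ≤
      ∑ i, ∑ j, if H.Adj i j then (y i + y j) ^ 2 else 0 := by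
    have e : ∑ i, ∑ j, (4 * (y i * y j) - if i = j then 4 * y i else 0) =
        4 * ((n : ℝ) - k - 1) ^ 2 - 4 * ((n : ℝ) - k - 1) := by
      simp only [Finset.sum_sub_distrib, ← Finset.mul_sum, Finset.sum_ite_eq, Finset.mem_univ,
        if_true, ← Finset.sum_mul]
      rw [hsum]
      ring
    rw [← e]
    refine Finset.sum_le_sum fun i _ => Finset.sum_le_sum fun j _ => ?_
    by_cases hij : i = j
    · subst hij
      have : ¬ H.Adj i i := H.irrefl
      simp only [if_true, this, if_false, y]
      split_ifs <;> norm_num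
    · by_cases hi : i.val < n - (k + 1)
      · by_cases hj : j.val < n - (k + 1)
        · have : H.Adj i j := by
            rw [hH, adj_iff]
            exact ⟨hij, Or.inr (Or.inr ⟨hi, hj⟩)⟩
          simp only [this, hij, if_true, if_false, y, hi, hj]
          norm_num
        · simp only [hij, if_false, y, hj]
          split_ifs <;> norm_num
      · simp only [hij, if_false, y, hi]
        split_ifs <;> norm_num
  rw [hyy] at hr
  have hpos : (0 : ℝ) < (n : ℝ) - k - 1 := by
    have : (2 * (k : ℝ) + 12) ≤ n := by exact_mod_cast hn
    have : (0 : ℝ) ≤ k := Nat.cast_nonneg _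
    linarith
  nlinarith

lemma numeric (k n s : ℝ) (hk : 1 ≤ k) (hn : 2 * k + 12 ≤ n) (hs : 2 ≤ s) (hsn : (k + 2) * s ≤ n) :
    s * (n - 1) + (k + 1) * s ^ 2 + (n - (k + 2) * s) * (n - 1 - (k + 1) * s) <
      (n - 1) * (n - 2 * k - 2) := by
  obtain ⟨e, he⟩ : ∃ e, n = (k + 2) * e := ⟨n / (k + 2), by field_simp⟩
  have hK : 0 < k + 2 := by linarith
  have hse : s ≤ e := by
    rw [he] at hsn
    exact le_of_mul_le_mul_left hsn hK
  have h2 : 0 < (n - 1) * (n - 2 * k - 2) - (2 * (n - 1) + (k + 1) * 2 ^ 2 +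
      (n - (k + 2) * 2) * (n - 1 - (k + 1) * 2)) := by
    nlinarith
  have he2 : 0 < (n - 1) * (n - 2 * k - 2) - (e * (n - 1) + (k + 1) * e ^ 2 +
      (n - (k + 2) * e) * (n - 1 - (k + 1) * e)) := by
    have e1 : e * (n - 1) + (k + 1) * e ^ 2 + (n - (k + 2) * e) * (n - 1 - (k + 1) * e) =
        e * (2 * n - e - 1) := by rw [he]; ring
    rw [e1]
    have e3 : n - 2 * k - 2 = (k + 2) * (e - 2) + 2 := by rw [he]; ring
    have e0 : 2 < e := by nlinarith
    by_cases h5 : e ≤ 5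
    · nlinarith
    · have : 2 * e ≤ n - 2 * k - 2 := by rw [e3]; nlinarith
      nlinarith
  have e0 : 2 < e := by nlinarith
  set F : ℝ → ℝ := fun s => (n - 1) * (n - 2 * k - 2) - (s * (n - 1) + (k + 1) * s ^ 2 +
      (n - (k + 2) * s) * (n - 1 - (k + 1) * s)) with hF
  have key : F s * (e - 2) = F 2 * (e - s) + F e * (s - 2) +
      (k + 1) * (k + 3) * ((e - 2) * ((s - 2) * (e - s))) := by
    simp only [hF]; ring
  have hF2 : 0 < F 2 := h2
  have hFe : 0 < F e := he2
  have hp : 0 < F s * (e - 2) := by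
    rw [key]
    have t3 : 0 ≤ (k + 1) * (k + 3) * ((e - 2) * ((s - 2) * (e - s))) := by
      apply mul_nonneg
      · nlinarith
      · exact mul_nonneg (by linarith) (mul_nonneg (by linarith) (by linarith))
    rcases eq_or_lt_of_le hs with h | h
    · have t1 : 0 < F 2 * (e - s) := mul_pos hF2 (by linarith)
      have t2 : 0 ≤ F e * (s - 2) := mul_nonneg hFe.le (by linarith)
      linarith
    · have t1 : 0 ≤ F 2 * (e - s) := mul_nonneg hF2.le (by linarith)
      have t2 : 0 < F e * (s - 2) := mul_pos hFe (by linarith)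
      linarith
  have : 0 < F s := pos_of_mul_pos_left hp (by linarith)
  have h' : F s = (n - 1) * (n - 2 * k - 2) - (s * (n - 1) + (k + 1) * s ^ 2 +
      (n - (k + 2) * s) * (n - 1 - (k + 1) * s)) := rfl
  linarith

lemma degsum {n : ℕ} (G : SimpleGraph (Fin n)) (S I : Finset (Fin n)) (hI : I ⊆ Kan.iso G S) :
    ∑ i, QS.dg G i ≤ (n : ℝ) * (n - 1 - I.card) + S.card * I.card +
      I.card * (S.card - (n - 1 - I.card)) := by
  have hb : ∀ v, QS.dg G v ≤ ((n : ℝ) - 1 - I.card) + (if v ∈ S then (I.card : ℝ) else 0) +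
      (if v ∈ I then (S.card - ((n : ℝ) - 1 - I.card)) else 0) := by
    intro v
    unfold QS.dg
    have hvn : (univ.filter fun u => G.Adj v u) ⊆ univ.erase v := by
      intro u hu
      simp only [Finset.mem_filter, Finset.mem_univ, true_and] at hu
      simp [hu.ne']
    have hn0 : 1 ≤ n := by have := v.isLt; omega
    by_cases hvI : v ∈ I
    · have h := (Kan.mem_iso.1 (hI hvI))
      have hsub : (univ.filter fun u => G.Adj v u) ⊆ S := by
        intro u hu
        simp only [Finset.mem_filter, Finset.mem_univ, true_and] at hu
        exact h.2 u hu
      have := Finset.card_le_card hsub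
      have : ((univ.filter fun u => G.Adj v u).card : ℝ) ≤ S.card := by exact_mod_cast this
      simp only [hvI, h.1, if_true, if_false]
      linarith
    · by_cases hvS : v ∈ S
      · have := Finset.card_le_card hvn
        rw [Finset.card_erase_of_mem (Finset.mem_univ v), Finset.card_univ, Fintype.card_fin] at this
        have : (((univ.filter fun u => G.Adj v u).card + 1 : ℕ) : ℝ) ≤ n := by
          exact_mod_cast (by omega : (univ.filter fun u => G.Adj v u).card + 1 ≤ n)
        push_cast at this
        simp only [hvI, hvS, if_true, if_false]
        linarith
      · have hd : Disjoint (insert v (univ.filter fun u => G.Adj v u)) I := by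
          rw [Finset.disjoint_left]
          intro u hu huI
          rw [Finset.mem_insert] at hu
          rcases hu with rfl | hu
          · exact hvI huI
          · simp only [Finset.mem_filter, Finset.mem_univ, true_and] at hu
            exact hvS ((Kan.mem_iso.1 (hI huI)).2 v hu.symm)
        have h1 := Finset.card_le_univ (insert v (univ.filter fun u => G.Adj v u) ∪ I)
        rw [Finset.card_union_of_disjoint hd, Finset.card_insert_of_notMem (by simp),
          Fintype.card_fin] at h1
        have : (((univ.filter fun u => G.Adj v u).card + 1 + I.card : ℕ) : ℝ) ≤ n := by
          exact_mod_cast h1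
        push_cast at this
        simp only [hvI, hvS, if_false]
        linarith
  refine (Finset.sum_le_sum fun v _ => hb v).trans (le_of_eq ?_)
  rw [Finset.sum_add_distrib, Finset.sum_add_distrib, Finset.sum_ite_mem, Finset.sum_ite_mem]
  simp
  ring

lemma big_case {n k : ℕ} (hk : 1 ≤ k)
    (hn : 2 * k + 12 ≤ n) (G : SimpleGraph (Fin n)) (hG : G.Connected)
    (hq : qRad (oneJoinCliquePlusIso' n k) ≤ qRad G) (S : Finset (Fin n)) (hS : 2 ≤ S.card)
    (hiso : (k + 1) * S.card ≤ (Kan.iso G S).card) : False := by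
  obtain ⟨I, hI, hIc⟩ := Finset.exists_subset_card_eq hiso
  have hd : Disjoint S I := by
    rw [Finset.disjoint_right]
    intro u hu
    exact (Kan.mem_iso.1 (hI hu)).1
  have hc := Finset.card_le_univ (S ∪ I)
  rw [Finset.card_union_of_disjoint hd, Fintype.card_fin, hIc] at hc
  have h1 := degsum G S I hI
  rw [hIc] at h1
  have h2 := QS.feng_yu hG (by rw [Fintype.card_fin]; omega)
  rw [Fintype.card_fin] at h2
  have h3 := lower hn
  have hcr : ((k : ℝ) + 2) * S.card ≤ n := by
    have : ((S.card + (k + 1) * S.card : ℕ) : ℝ) ≤ n := by exact_mod_cast hc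
    push_cast at this
    linarith
  have hnr : 2 * (k : ℝ) + 12 ≤ n := by exact_mod_cast hn
  have hkr : (1 : ℝ) ≤ k := by exact_mod_cast hk
  have h4 := numeric k n S.card hkr hnr (by exact_mod_cast hS) hcr
  have h5 : 2 * ((n : ℝ) - k - 2) * ((n : ℝ) - 1) ≤ qRad G * ((n : ℝ) - 1) :=
    mul_le_mul_of_nonneg_right (h3.trans hq) (by linarith)
  push_cast at h1
  nlinarith

lemma one_case {n k : ℕ}
    (hn : 2 * k + 12 ≤ n) (G : SimpleGraph (Fin n))
    (hq : qRad (oneJoinCliquePlusIso' n k) ≤ qRad G) (v : Fin n)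
    (hiso : k + 1 ≤ (Kan.iso G {v}).card) : Nonempty (G ≃g oneJoinCliquePlusIso' n k) := by
  obtain ⟨I, hI, hIc⟩ := Finset.exists_subset_card_eq hiso
  have hIv : ∀ i ∈ I, ∀ j, G.Adj i j → j = v := by
    intro i hi j hj
    have := (Kan.mem_iso.1 (hI hi)).2 j hj
    simpa using this
  have hvI : v ∉ I := fun h => by
    have := (Kan.mem_iso.1 (hI h)).1
    simp at this
  let T : Finset (Fin n) := Finset.Ici ⟨n - (k + 1), by omega⟩
  have hT : ∀ a : Fin n, a ∈ T ↔ n - (k + 1) ≤ a.val := by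
    intro a
    simp only [T, Finset.mem_Ici, Fin.le_def]
  have hTc : T.card = k + 1 := by
    simp only [T, Fin.card_Ici]
    omega
  let e : {x // x ∈ I} ≃ {x // x ∈ T} := Finset.equivOfCardEq (hIc.trans hTc.symm)
  let σ1 : Fin n ≃ Fin n := e.extendSubtype
  have h1 : ∀ i, i ∈ I → σ1 i ∈ T := fun i hi => e.extendSubtype_mem i hi
  have h2 : ∀ i, i ∉ I → σ1 i ∉ T := fun i hi => e.extendSubtype_not_mem i hi
  let o : Fin n := ⟨0, by omega⟩
  have hoT : o ∉ T := by rw [hT]; simp only [o]; omega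
  let σ : Fin n ≃ Fin n := σ1.trans (Equiv.swap (σ1 v) o)
  have hσv : σ v = o := by simp [σ]
  have h3 : ∀ i, i ∉ I → σ i ∉ T := by
    intro i hi
    simp only [σ, Equiv.trans_apply]
    by_cases ha : σ1 i = σ1 v
    · rw [ha, Equiv.swap_apply_left]; exact hoT
    · by_cases hb : σ1 i = o
      · rw [hb, Equiv.swap_apply_right]; exact h2 v hvI
      · rw [Equiv.swap_apply_of_ne_of_ne ha hb]; exact h2 i hi
  have hmap : ∀ i j, G.Adj i j → (oneJoinCliquePlusIso' n k).Adj (σ i) (σ j) := by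
    intro i j hij
    rw [adj_iff]
    refine ⟨fun h => hij.ne (σ.injective h), ?_⟩
    by_cases hi : i ∈ I
    · have := hIv i hi j hij
      subst this
      right; left; rw [hσv]
    · by_cases hj : j ∈ I
      · have := hIv j hj i hij.symm
        subst this
        left; rw [hσv]
      · right; right
        have a1 := h3 i hi
        have a2 := h3 j hj
        rw [hT] at a1 a2
        omega
  haveI : Nonempty (Fin n) := ⟨o⟩
  have hback := QS.strict_mono (G := G) (H := oneJoinCliquePlusIso' n k) σ o (by
    intro u hu
    rw [adj_iff]
    exact ⟨hu.symm, Or.inl rfl⟩) hmap hq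
  exact ⟨⟨σ, fun {a b} => ⟨hback a b, hmap a b⟩⟩⟩

end Fin1

/-- **Theorem (signless Laplacian spectral radius and spanning trees with
bounded leaf degree).**  Let `k ≥ 1` and let `G` be a connected graph of order
`n ≥ 2k + 12`.  If `q(G) ≥ q(K₁ ∨ (K_{n-k-2} + (k+1)K₁))`, then `G` has a
spanning tree with leaf degree at most `k` unless
`G ≅ K₁ ∨ (K_{n-k-2} + (k+1)K₁)`. -/
theorem signless_laplacian_spanning_tree_leaf_degree {n k : ℕ} (hk : 1 ≤ k)
    (hn : 2 * k + 12 ≤ n) (G : SimpleGraph (Fin n)) (hG : G.Connected)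
    (hq : qRad (oneJoinCliquePlusIso' n k) ≤ qRad G) :
    HasSpanningTreeLeafDegLE G k ∨ Nonempty (G ≃g oneJoinCliquePlusIso' n k) := by


  by_cases hC : Kan.Cond G k
  · exact Or.inl (Kan.kaneko hk hG (by rw [Fintype.card_fin]; omega) hC)
  · right
    unfold Kan.Cond at hC
    push Not at hC
    obtain ⟨S, hS, hsf⟩ := hC
    unfold Kan.sf at hsf
    have hiso : (k + 1) * S.card ≤ (Kan.iso G S).card := by
      have : (((k + 1) * S.card : ℕ) : ℤ) ≤ ((Kan.iso G S).card : ℤ) := by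
        push_cast
        linarith
      exact_mod_cast this
    have hpos := hS.card_pos
    by_cases h2 : 2 ≤ S.card
    · exact (Fin1.big_case hk hn G hG hq S h2 hiso).elim
    · have h1 : S.card = 1 := by omega
      obtain ⟨v, rfl⟩ := Finset.card_eq_one.1 h1
      rw [h1, mul_one] at hiso
      exact Fin1.one_case hn G hq v hiso
end

section
/- Let k ≥ 2 be an integer and let H be a connected graph of order n ≥ max{6k+5, k² + k + 2} that is (n−1)-closed, i.e., every pair of nonadjacent vertices u, v of H satisfies d(u) + d(v) ≤ n − 2. If e(H) ≥ C(n−k−1, 2) + k² + k + 1 and H has no spanning k-ended-tree, then H is isomorphic to K₁ ∨ (K_{n−k−1} + kK₁). -/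
open Finset
open scoped Classical

/-- The tree given by a parent function. -/
def parentGraph {V : Type*} (r : V) (p : V → V) : SimpleGraph V :=
  SimpleGraph.fromRel fun u v => u ≠ r ∧ p u = v

lemma parentGraph_isTree {V : Type*} [Fintype V] (r : V) (p : V → V) (rk : V → ℕ)
    (h : ∀ v, v ≠ r → rk (p v) < rk v) : (parentGraph r p).IsTree := by
  have hne : ∀ v, v ≠ r → v ≠ p v := fun v hv he => by
    have := h v hv
    rw [← he] at this
    omega
  have hadj : ∀ v, v ≠ r → (parentGraph r p).Adj v (p v) := fun v hv => by
    simp [parentGraph, hne v hv, hv]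
  have hreach : ∀ m v, rk v = m → (parentGraph r p).Reachable v r := by
    intro m
    induction m using Nat.strong_induction_on with
    | _ m ih =>
      intro v hv
      by_cases hr : v = r
      · subst hr; exact SimpleGraph.Reachable.refl _
      · exact (hadj v hr).reachable.trans (ih _ (hv ▸ h v hr) (p v) rfl)
  have hconn : (parentGraph r p).Connected := by
    haveI : Nonempty V := ⟨r⟩
    exact ⟨fun u v => (hreach _ u rfl).trans (hreach _ v rfl).symm⟩
  rw [SimpleGraph.isTree_iff_connected_and_card]
  refine ⟨hconn, le_antisymm ?_ hconn.card_vert_le_card_edgeSet_add_one⟩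
  have hsub : (parentGraph r p).edgeFinset ⊆ (univ.erase r).image (fun v => s(v, p v)) := by
    intro e he
    induction e using Sym2.ind with
    | _ a b =>
      rw [SimpleGraph.mem_edgeFinset, SimpleGraph.mem_edgeSet] at he
      simp only [parentGraph, SimpleGraph.fromRel_adj] at he
      rw [mem_image]
      rcases he with ⟨_, ⟨h1, h2⟩ | ⟨h1, h2⟩⟩
      · exact ⟨a, by simp [h1], by rw [h2]⟩
      · exact ⟨b, by simp [h1], by rw [h2, Sym2.eq_swap]⟩
  have h1 := (card_le_card hsub).trans card_image_le
  rw [card_erase_of_mem (mem_univ r), card_univ] at h1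
  have : 0 < Fintype.card V := Fintype.card_pos_iff.2 ⟨r⟩
  rw [Nat.card_eq_fintype_card, Nat.card_eq_fintype_card, ← SimpleGraph.edgeFinset_card]
  omega

lemma exists_path_order {V : Type*} (C : Finset V) (x y : V) (hx : x ∈ C) (hy : y ∈ C)
    (hxy : x ≠ y) : ∃ (q : V → V) (rk : V → ℕ), (∀ c ∈ C, rk c < C.card) ∧
      (∀ c ∈ C, c ≠ x → q c ∈ C ∧ rk (q c) < rk c) ∧
      (∀ c ∈ C, c ≠ y → ∃ c' ∈ C, c' ≠ x ∧ q c' = c) := by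
  have hm : 2 ≤ C.card := by
    have : ({x, y} : Finset V) ⊆ C := by
      intro z hz; simp at hz; rcases hz with rfl | rfl <;> assumption
    have h2 := card_le_card this
    rwa [card_pair hxy] at h2
  obtain ⟨e, hex, hey⟩ : ∃ e : C ≃ Fin C.card, (e ⟨x, hx⟩).val = 0 ∧
      (e ⟨y, hy⟩).val = C.card - 1 := by
    let e0 := C.equivFin
    let z : Fin C.card := ⟨0, by omega⟩
    let l : Fin C.card := ⟨C.card - 1, by omega⟩
    let e1 := e0.trans (Equiv.swap (e0 ⟨x, hx⟩) z)
    have h1 : e1 ⟨x, hx⟩ = z := by simp [e1]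
    let e2 := e1.trans (Equiv.swap (e1 ⟨y, hy⟩) l)
    have h2 : e2 ⟨y, hy⟩ = l := by simp [e2]
    have h3 : e2 ⟨x, hx⟩ = z := by
      simp only [e2, Equiv.trans_apply]
      rw [h1, Equiv.swap_apply_of_ne_of_ne]
      · rw [← h1]; intro hh; have := e1.injective hh; simp at this; exact hxy this
      · intro hh; have := congrArg Fin.val hh; simp [z, l] at this; omega
    exact ⟨e2, by rw [h3], by rw [h2]⟩
  let rk : V → ℕ := fun v => if h : v ∈ C then (e ⟨v, h⟩).val else 0
  have hrk : ∀ v (h : v ∈ C), rk v = (e ⟨v, h⟩).val := fun v h => by simp [rk, h]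
  have hinv : ∀ i : Fin C.card, rk (e.symm i).1 = i.val := fun i => by
    rw [hrk _ (e.symm i).2]; simp
  have hinj : ∀ a ∈ C, ∀ b ∈ C, rk a = rk b → a = b := by
    intro a ha b hb hab
    rw [hrk a ha, hrk b hb] at hab
    have := e.injective (Fin.ext hab)
    simpa using this
  have hlt : ∀ c ∈ C, rk c < C.card := fun c hc => by rw [hrk c hc]; exact (e _).2
  have hrx : rk x = 0 := by rw [hrk x hx, hex]
  have hry : rk y = C.card - 1 := by rw [hrk y hy, hey]
  let q : V → V := fun v => (e.symm ⟨(rk v - 1) % C.card, Nat.mod_lt _ (by omega)⟩).1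
  have hq : ∀ c ∈ C, rk (q c) = rk c - 1 := fun c hc => by
    have h1 := hinv ⟨(rk c - 1) % C.card, Nat.mod_lt _ (by omega)⟩
    have h2 := hlt c hc
    simp only [q]
    rw [h1]
    exact Nat.mod_eq_of_lt (by omega)
  refine ⟨q, rk, hlt, ?_, ?_⟩
  · intro c hc hcx
    refine ⟨(e.symm _).2, ?_⟩
    rw [hq c hc]
    have : rk c ≠ 0 := fun h => hcx (hinj c hc x hx (by omega))
    omega
  · intro c hc hcy
    have h1 : rk c ≠ C.card - 1 := fun h => hcy (hinj c hc y hy (by omega))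
    have h2 := hlt c hc
    have h3 := hinv ⟨rk c + 1, by omega⟩
    refine ⟨(e.symm ⟨rk c + 1, by omega⟩).1, (e.symm _).2, ?_, ?_⟩
    · intro h; rw [h, hrx] at h3; simp at h3
    · apply hinj _ (e.symm _).2 _ hc
      rw [hq _ (e.symm _).2, h3]; simp

lemma spanning_of_clique {V : Type*} [Fintype V] (H : SimpleGraph V) (k : ℕ) (C : Finset V)
    (hC : H.IsClique C) (x y : V) (hx : x ∈ C) (hy : y ∈ C) (hxy : x ≠ y)
    (p : V → V) (d : V → ℕ) (hp : ∀ v, v ∉ C → H.Adj v (p v))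
    (hd : ∀ v, v ∉ C → p v ∈ C ∨ d (p v) < d v)
    (hcard : (univ.filter fun v => (v ∈ C → v = x ∨ v = y) ∧ ∀ u, u ∉ C → p u ≠ v).card ≤ k) :
    HasSpanningKEndedTree H k := by
  obtain ⟨q, rk, hlt, hq, hsucc⟩ := exists_path_order C x y hx hy hxy
  let P : V → V := fun v => if v ∈ C then q v else p v
  let R : V → ℕ := fun v => if v ∈ C then rk v else C.card + d v
  have hR : ∀ v, v ≠ x → R (P v) < R v := by
    intro v hv
    by_cases hvC : v ∈ C
    · obtain ⟨h1, h2⟩ := hq v hvC hv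
      simp [P, R, hvC, h1, h2]
    · rcases hd v hvC with h | h
      · have := hlt _ h
        simp [P, R, hvC, h]; omega
      · by_cases h' : p v ∈ C
        · have := hlt _ h'
          simp [P, R, hvC, h']; omega
        · simp [P, R, hvC, h', h]
  have hT := parentGraph_isTree x P R hR
  have hne : ∀ v, v ≠ x → v ≠ P v := fun v hv he => by
    have := hR v hv
    rw [← he] at this
    omega
  have hadj : ∀ v, v ≠ x → (parentGraph x P).Adj v (P v) := fun v hv => by
    simp [parentGraph, hne v hv, hv]
  have two : ∀ v a b, (parentGraph x P).Adj v a → (parentGraph x P).Adj v b → a ≠ b →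
      (parentGraph x P).degree v ≠ 1 := by
    intro v a b ha hb hab h1
    rw [SimpleGraph.degree_eq_one_iff_existsUnique_adj] at h1
    exact hab (h1.unique ha hb)
  refine ⟨parentGraph x P, ?_, hT, le_trans (card_le_card ?_) hcard⟩
  · have key : ∀ u, u ≠ x → u ≠ P u → H.Adj u (P u) := by
      intro u hu hne
      by_cases huC : u ∈ C
      · have h1 : P u = q u := by simp [P, huC]
        rw [h1] at hne ⊢
        exact hC huC (hq u huC hu).1 hne
      · have h1 : P u = p u := by simp [P, huC]
        rw [h1]; exact hp u huC
    intro a b hab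
    simp only [parentGraph, SimpleGraph.fromRel_adj] at hab
    rcases hab with ⟨hn, ⟨h1, rfl⟩ | ⟨h1, rfl⟩⟩
    · exact key a h1 hn
    · exact (key b h1 (Ne.symm hn)).symm
  · intro v hv
    simp only [mem_filter, mem_univ, true_and] at hv ⊢
    constructor
    · intro hvC
      by_contra hcon
      push Not at hcon
      obtain ⟨c, hc, hcx, hcv⟩ := hsucc v hvC hcon.2
      have hPc : P c = v := by simp [P, hc, hcv]
      have h1 := hadj c hcx
      rw [hPc] at h1
      refine two v (P v) c (hadj v hcon.1) h1.symm ?_ hv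
      intro he
      have h2 := hR v hcon.1
      have h3 := hR c hcx
      rw [hPc] at h3
      rw [he] at h2
      omega
    · intro u hu hpu
      have hux : u ≠ x := fun h => hu (h ▸ hx)
      have hPu : P u = v := by simp [P, hu, hpu]
      have h1 := hadj u hux
      rw [hPu] at h1
      by_cases hvx : v = x
      · obtain ⟨c, hc, hcx, hcv⟩ := hsucc x hx hxy
        have hPc : P c = v := by simp [P, hc, hcv, hvx]
        have h2 := hadj c hcx
        rw [hPc] at h2
        exact two v u c h1.symm h2.symm (fun h => hu (h ▸ hc)) hv
      · refine two v (P v) u (hadj v hvx) h1.symm ?_ hv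
        intro he
        have h2 := hR v hvx
        have h3 := hR u hux
        rw [hPu] at h3
        rw [he] at h2
        omega

lemma exists_parent {V : Type*} (H : SimpleGraph V) (hH : H.Connected) (c v : V) (h : v ≠ c) :
    ∃ w, H.Adj v w ∧ H.dist w c < H.dist v c := by
  obtain ⟨P, hP⟩ := hH.exists_walk_length_eq_dist v c
  cases P with
  | nil => exact absurd rfl h
  | cons hadj Q =>
    refine ⟨_, hadj, ?_⟩
    have := SimpleGraph.dist_le Q
    simp at hP
    omega

/-- Structure: large clique whose complement has at most `k` vertices. -/
lemma structure_of_clique {V : Type*} [Fintype V] [DecidableEq V] (H : SimpleGraph V) (hH : H.Connected)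
    (k : ℕ) (hk : 2 ≤ k) (C : Finset V) (hC : H.IsClique C) (hC2 : 2 ≤ C.card)
    (hs : (univ \ C).card ≤ k) (hno : ¬ HasSpanningKEndedTree H k) :
    (univ \ C).card = k ∧ ∃ w ∈ C, ∀ a, a ∉ C → ∀ b, H.Adj a b ↔ b = w := by
  have other : ∀ y ∈ C, ∃ x ∈ C, x ≠ y := fun y hy => exists_mem_ne (by omega) y
  -- the basic leaf count: one end is used
  have base : ∀ (p : V → V) (d : V → ℕ), (∀ v, v ∉ C → H.Adj v (p v)) →
      (∀ v, v ∉ C → p v ∈ C ∨ d (p v) < d v) →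
      (∀ u, u ∉ C → p u ∈ C → (univ \ C).card = k ∧ (∀ u', u' ∉ C → p u' ∈ C ∧ p u' = p u)) := by
    intro p d hp hd u hu hpu
    obtain ⟨x, hx, hxy⟩ := other _ hpu
    have h1 : (univ.filter fun v => (v ∈ C → v = x ∨ v = p u) ∧ ∀ u, u ∉ C → p u ≠ v) ⊆
        insert x (univ \ C) := by
      intro v hv
      simp only [mem_filter, mem_univ, true_and, mem_insert, mem_sdiff] at hv ⊢
      by_cases hvC : v ∈ C
      · rcases hv.1 hvC with h | h
        · exact Or.inl h
        · exact absurd h.symm (hv.2 u hu)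
      · exact Or.inr hvC
    have hxs : x ∉ univ \ C := by simp [hx]
    have h2 : k < (univ.filter fun v => (v ∈ C → v = x ∨ v = p u) ∧
        ∀ u, u ∉ C → p u ≠ v).card := by
      by_contra hcon
      exact hno (spanning_of_clique H k C hC x (p u) hx hpu hxy p d hp hd (by convert Nat.le_of_not_lt hcon))
    have h3 := card_le_card h1
    rw [card_insert_of_notMem hxs] at h3
    refine ⟨by omega, ?_⟩
    have hin : ∀ u', u' ∉ C → p u' ∈ C := by
      intro u' hu'
      by_contra hcon
      have h4 : (univ.filter fun v => (v ∈ C → v = x ∨ v = p u) ∧ ∀ u, u ∉ C → p u ≠ v) ⊆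
          (insert x (univ \ C)).erase (p u') := by
        intro v hv
        rw [mem_erase]
        refine ⟨?_, h1 hv⟩
        simp only [mem_filter, mem_univ, true_and] at hv
        exact fun h => hv.2 u' hu' h.symm
      have h5 := card_le_card h4
      rw [card_erase_of_mem (by simp [hcon]), card_insert_of_notMem hxs] at h5
      omega
    intro u' hu'
    refine ⟨hin u' hu', ?_⟩
    by_contra hcon
    apply hno
    refine spanning_of_clique H k C hC (p u') (p u) (hin u' hu') hpu hcon p d hp hd
      (le_trans (card_le_card ?_) hs)
    intro v hv
    simp only [mem_filter, mem_univ, true_and, mem_sdiff] at hv ⊢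
    intro hvC
    rcases hv.1 hvC with h | h
    · exact hv.2 u' hu' h.symm
    · exact hv.2 u hu h.symm
  obtain ⟨c0, hc0⟩ : C.Nonempty := card_pos.1 (by omega)
  -- the distance parent function
  have hpar : ∀ v, ∃ w, v ∉ C → H.Adj v w ∧ H.dist w c0 < H.dist v c0 := by
    intro v
    by_cases hv : v ∈ C
    · exact ⟨v, fun h => absurd hv h⟩
    · obtain ⟨w, hw⟩ := exists_parent H hH c0 v (fun h => hv (h ▸ hc0))
      exact ⟨w, fun _ => hw⟩
  choose p hp using hpar
  have hp1 : ∀ v, v ∉ C → H.Adj v (p v) := fun v hv => (hp v hv).1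
  have hp2 : ∀ v, v ∉ C → p v ∈ C ∨ H.dist (p v) c0 < H.dist v c0 := fun v hv => Or.inr (hp v hv).2
  by_cases hA : (univ \ C).Nonempty
  swap
  · exfalso
    rw [not_nonempty_iff_eq_empty] at hA
    obtain ⟨x, hx, hxy⟩ := other c0 hc0
    apply hno
    refine spanning_of_clique H k C hC x c0 hx hc0 hxy p (fun v => H.dist v c0) hp1 hp2
      (le_trans (card_le_card (t := {x, c0}) ?_) (by rw [card_pair hxy]; exact hk))
    intro v hv
    have hvC : v ∈ C := by
      by_contra h
      have : v ∈ univ \ C := by simp [h]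
      rw [hA] at this
      simp at this
    simp only [mem_filter, mem_univ, true_and, mem_insert, mem_singleton] at hv ⊢
    exact hv.1 hvC
  obtain ⟨u, huA, humin⟩ := exists_min_image (univ \ C) (fun v => H.dist v c0) hA
  have hu : u ∉ C := by simpa using huA
  have hpu : p u ∈ C := by
    by_contra h
    have h1 := humin (p u) (by simp [h])
    have h2 := (hp u hu).2
    omega
  obtain ⟨hcard, hall⟩ := base p (fun v => H.dist v c0) hp1 hp2 u hu hpu
  refine ⟨hcard, p u, hpu, ?_⟩
  intro a ha b
  constructor
  swap
  · rintro rfl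
    have := hp1 a ha
    rwa [(hall a ha).2] at this
  intro hab
  obtain ⟨a', ha', hne⟩ : ∃ a' ∈ univ \ C, a' ≠ a := exists_mem_ne (by omega) a
  have ha'C : a' ∉ C := by simpa using ha'
  have h1 := base (Function.update p a b) (fun v => if v = a then 1 else 0) (by
      intro v hv
      by_cases h : v = a
      · subst h; simpa using hab
      · simpa [h] using hp1 v hv) (by
      intro v hv
      by_cases h : v = a
      · subst h; right; simp [hab.ne']
      · left; simpa [h] using (hall v hv).1) a' ha'C (by
      simpa [hne] using (hall a' ha'C).1)
  have h2 := (h1.2 a ha).2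
  simp only [Function.update_self, Function.update_of_ne hne] at h2
  rw [h2, (hall a' ha'C).2]

lemma edge_count {V : Type*} [Fintype V] [DecidableEq V] (H : SimpleGraph V) (C : Finset V) :
    2 * H.edgeFinset.card + C.card ≤ C.card * C.card + 2 * ∑ v ∈ univ \ C, H.degree v := by
  rw [← H.sum_degrees_eq_twice_card_edges]
  rw [← sum_sdiff (subset_univ C)]
  have h1 : ∀ v ∈ C, H.degree v + 1 ≤ C.card + (bipartiteAbove H.Adj (univ \ C) v).card := by
    intro v hv
    have hsub : H.neighborFinset v ⊆ (C.erase v) ∪ (bipartiteAbove H.Adj (univ \ C) v) := by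
      intro w hw
      rw [SimpleGraph.mem_neighborFinset] at hw
      by_cases hwC : w ∈ C
      · simp [hwC, hw.ne']
      · simp [bipartiteAbove, hwC, hw]
    have h2 := (card_le_card hsub).trans (card_union_le _ _)
    rw [card_erase_of_mem hv, SimpleGraph.card_neighborFinset_eq_degree] at h2
    have : 0 < C.card := card_pos.2 ⟨v, hv⟩
    omega
  have h2 := sum_le_sum h1
  rw [sum_add_distrib, sum_add_distrib, sum_card_bipartiteAbove_eq_sum_card_bipartiteBelow] at h2
  have h3 : ∑ b ∈ univ \ C, (bipartiteBelow H.Adj C b).card ≤ ∑ v ∈ univ \ C, H.degree v := by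
    apply sum_le_sum
    intro b _
    rw [← SimpleGraph.card_neighborFinset_eq_degree]
    apply card_le_card
    intro w hw
    simp only [bipartiteBelow, mem_filter] at hw
    rw [SimpleGraph.mem_neighborFinset]
    exact hw.2.symm
  simp only [sum_const, smul_eq_mul, mul_one] at h2
  omega

/-- Arithmetic: the complement of a maximum clique is small. -/
lemma arith (n k c c0 m e : ℤ) (hk : 2 ≤ k) (hn : 6 * k + 5 ≤ n)
    (hc : 0 ≤ c) (hcn : k + 1 ≤ n - c) (hc0 : 0 ≤ c0) (hc0c : c0 ≤ c)
    (he : (n - k - 1) * (n - k - 2) + 2 * (k ^ 2 + k + 1) ≤ 2 * e)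
    (h1 : 2 * e + c ≤ c * c + 2 * ((n - c) * (n - c - 1)))
    (hm : 2 * m ≤ n - 2) (hm0 : 0 ≤ m)
    (h2 : 2 * e ≤ c0 * (n - 1) + (n - c0) * m) : False := by
  have h3 : 3 * c ≤ n + 3 * k + 1 := by
    by_contra hcon
    push Not at hcon
    have : 0 ≤ (n - c - (k + 1)) * (3 * c - (n + 3 * k + 2)) :=
      mul_nonneg (by omega) (by omega)
    nlinarith
  have h4 : 2 * e ≤ c * (n - 1) + (n - c) * m := by
    nlinarith [mul_nonneg (sub_nonneg.2 hc0c) (show 0 ≤ n - 1 - m by omega)]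
  rcases eq_or_lt_of_le hn with hn | hn
  · subst hn
    have hm' : m ≤ 3 * k + 1 := by omega
    have hc' : c ≤ 3 * k + 2 := by omega
    have h5 : c * (6 * k + 5 - 1) + (6 * k + 5 - c) * m ≤
      c * (6 * k + 5 - 1) + (6 * k + 5 - c) * (3 * k + 1) := by
      have := mul_le_mul_of_nonneg_left hm' (show 0 ≤ 6 * k + 5 - c by omega)
      linarith
    have h6 : 0 ≤ (3 * k + 2 - c) * (3 * k + 3) := mul_nonneg (by omega) (by omega)
    nlinarith
  · obtain ⟨t, rfl⟩ : ∃ t, n = 6 * k + 6 + t := ⟨n - 6 * k - 6, by ring⟩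
    have ht : 0 ≤ t := by omega
    set n := 6 * k + 6 + t with hn'
    have h5 := mul_le_mul_of_nonneg_left hm (show 0 ≤ n - c by omega)
    have h6 : 0 ≤ (n + 3 * k + 1 - 3 * c) * n := mul_nonneg (by omega) (by omega)
    have h7 : 6 * (2 * e) ≤ n * (n + 3 * k + 1) + 3 * n * (n - 2) := by nlinarith
    have h8 := mul_nonneg ht ht
    have h9 := mul_nonneg ht (show 0 ≤ k by omega)
    rw [hn'] at h7 he
    nlinarith

lemma exists_perm {n k : ℕ} (hn : k < n) (C : Finset (Fin n)) (hC : (univ \ C).card = k)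
    (w : Fin n) (hw : w ∈ C) :
    ∃ e : Fin n ≃ Fin n, (e w).val = 0 ∧ ∀ v, v ∈ C ↔ (e v).val < n - k := by
  have hCc : C.card = n - k := by
    have := card_sdiff_add_card_eq_card (subset_univ C)
    simp at this
    omega
  have hcard : Fintype.card {x // x ∈ C} = Fintype.card {i : Fin n // i.val < n - k} := by
    rw [Fintype.card_coe, hCc, Fintype.card_subtype]
    rw [Fin.card_filter_val_lt]
    omega
  let e0 := Fintype.equivOfCardEq hcard
  let e1 : Equiv.Perm (Fin n) := Equiv.extendSubtype e0
  let z : Fin n := ⟨0, by omega⟩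
  have h1 : ∀ v, v ∈ C ↔ (e1 v).val < n - k := fun v =>
    ⟨fun h => Equiv.extendSubtype_mem e0 v h,
      fun h => by_contra fun h' => Equiv.extendSubtype_not_mem e0 v h' h⟩
  refine ⟨e1.trans (Equiv.swap (e1 w) z), by simp [z], fun v => ?_⟩
  rw [h1 v, Equiv.trans_apply, Equiv.swap_apply_def]
  have h2 := (h1 w).1 hw
  split_ifs with ha hb
  · rw [ha]; simp only [h2, z]; simp; omega
  · rw [hb]; simp only [h2, z]; simp; omega
  · rfl

/-- **Lemma (structure of `(n-1)`-closed graphs with many edges and no spanning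
`k`-ended-tree).**  Let `k ≥ 2` and let `H` be a connected `(n-1)`-closed graph
of order `n ≥ max {6k+5, k² + k + 2}` (i.e. every pair of distinct nonadjacent
vertices has degree sum at most `n - 2`).  If `e(H) ≥ C(n-k-1, 2) + k² + k + 1`
and `H` has no spanning `k`-ended-tree, then `H ≅ K₁ ∨ (K_{n-k-1} + kK₁)`. -/
theorem closed_graph_no_spanning_tree_structure {n k : ℕ} (hk : 2 ≤ k)
    (hn1 : 6 * k + 5 ≤ n) (hn2 : k ^ 2 + k + 2 ≤ n)
    (H : SimpleGraph (Fin n)) (hH : H.Connected)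
    (hclosed : ∀ u v : Fin n, u ≠ v → ¬ H.Adj u v →
      (H.degree u : ℤ) + (H.degree v : ℤ) ≤ (n : ℤ) - 2)
    (he : Nat.choose (n - k - 1) 2 + k ^ 2 + k + 1 ≤ H.edgeFinset.card)
    (hno : ¬ HasSpanningKEndedTree H k) :
    Nonempty (H ≃g oneJoinCliquePlusIso n k) := by
  obtain ⟨C, hCn⟩ := H.exists_isNClique_cliqueNum
  have hC := hCn.isClique
  have hCc := hCn.card_eq
  have hmax : ∀ D : Finset (Fin n), H.IsClique D → D.card ≤ C.card := fun D hD => by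
    rw [hCc]; exact hD.card_le_cliqueNum
  have hsum : (univ \ C).card + C.card = n := by
    have := card_sdiff_add_card_eq_card (subset_univ C)
    simpa using this
  have hs : (univ \ C).card ≤ k := by
    by_contra hcon
    push Not at hcon
    -- degrees outside `C`
    have hdeg : ∀ a ∈ univ \ C, H.degree a ≤ (univ \ C).card - 1 := by
      intro a ha
      have haC : a ∉ C := by simpa using ha
      obtain ⟨u, hu, hau⟩ : ∃ u ∈ C, ¬ H.Adj a u := by
        by_contra hall
        push Not at hall
        have hcl : H.IsClique (insert a C : Finset (Fin n)) := by
          rw [coe_insert]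
          exact hC.insert (fun b hb _ => hall b hb)
        have := hmax _ hcl
        rw [card_insert_of_notMem haC] at this
        omega
      have h1 := hclosed a u (fun h => haC (h ▸ hu)) hau
      have h2 : C.card - 1 ≤ H.degree u := by
        rw [← card_erase_of_mem hu, ← SimpleGraph.card_neighborFinset_eq_degree]
        apply card_le_card
        intro v hv
        rw [mem_erase] at hv
        rw [SimpleGraph.mem_neighborFinset]
        exact hC hu hv.2 (Ne.symm hv.1)
      have : 0 < C.card := card_pos.2 ⟨u, hu⟩
      omega
    have h1 := edge_count H C
    have h2 := sum_le_card_nsmul _ _ _ hdeg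
    rw [smul_eq_mul] at h2
    let D : Finset (Fin n) := univ.filter fun v => n - 1 ≤ 2 * H.degree v
    have hD : H.IsClique D := by
      intro a ha b hb hab
      by_contra hn
      have h3 := hclosed a b hab hn
      simp [D] at ha hb
      omega
    have h3 := hmax D hD
    have h4 : 2 * H.edgeFinset.card ≤ D.card * (n - 1) + (n - D.card) * ((n - 2) / 2) := by
      rw [← H.sum_degrees_eq_twice_card_edges, ← sum_sdiff (subset_univ D), add_comm]
      have hDc : (univ \ D).card = n - D.card := by
        rw [card_sdiff_of_subset (subset_univ D)]; simp
      apply add_le_add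
      · rw [← smul_eq_mul]
        apply sum_le_card_nsmul
        intro v _
        have := H.degree_lt_card_verts v
        simp at this
        omega
      · rw [← hDc, ← smul_eq_mul]
        apply sum_le_card_nsmul
        intro v hv
        simp [D] at hv
        omega
    have h5 : 2 * Nat.choose (n - k - 1) 2 = (n - k - 1) * (n - k - 2) := by
      rw [Nat.choose_two_right, Nat.mul_div_cancel' (Nat.even_mul_pred_self _).two_dvd]
      rfl
    have hDn : D.card ≤ n := by omega
    refine arith n k C.card D.card ((n - 2) / 2 : ℕ) H.edgeFinset.card (by omega) (by omega)
      (by omega) (by omega) (by omega) (by omega) ?_ ?_ (by omega) (by omega) ?_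
    · have h6 : (n - k - 1) * (n - k - 2) + 2 * (k ^ 2 + k + 1) ≤ 2 * H.edgeFinset.card := by
        omega
      have e1 : ((n - k - 1 : ℕ) : ℤ) = n - k - 1 := by omega
      have e2 : ((n - k - 2 : ℕ) : ℤ) = n - k - 2 := by omega
      rw [← e1, ← e2]
      exact_mod_cast h6
    · have h6 : 2 * H.edgeFinset.card + C.card ≤ C.card * C.card +
          2 * ((univ \ C).card * ((univ \ C).card - 1)) := by omega
      have e1 : (((univ \ C).card - 1 : ℕ) : ℤ) = n - C.card - 1 := by omega
      have e2 : ((univ \ C).card : ℤ) = n - C.card := by omega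
      rw [← e1, ← e2]
      exact_mod_cast h6
    · have e1 : ((n - 1 : ℕ) : ℤ) = n - 1 := by omega
      have e2 : ((n - D.card : ℕ) : ℤ) = n - D.card := by omega
      rw [← e1, ← e2]
      exact_mod_cast h4
  obtain ⟨hcard, w, hw, hA⟩ := structure_of_clique H hH k hk C hC (by omega) hs hno
  obtain ⟨e, he0, heC⟩ := exists_perm (by omega) C hcard w hw
  have hz : ∀ v, (e v).val = 0 ↔ v = w := fun v =>
    ⟨fun h => e.injective (Fin.ext (by omega)), fun h => by rw [h, he0]⟩
  refine ⟨⟨e, ?_⟩⟩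
  intro a b
  simp only [oneJoinCliquePlusIso, SimpleGraph.fromRel_adj, ← heC, hz, ne_eq,
    EmbeddingLike.apply_eq_iff_eq]
  by_cases hab : a = b
  · subst hab; simp
  by_cases ha : a ∈ C
  · by_cases hb : b ∈ C
    · have := hC ha hb hab
      simp [hab, ha, hb, this]
    · rw [SimpleGraph.adj_comm, hA b hb a]
      have : b ≠ w := fun h => hb (h ▸ hw)
      simp [hab, hb, this]
  · rw [hA a ha b]
    have : a ≠ w := fun h => ha (h ▸ hw)
    simp [hab, ha, this]
end

section
/- Let k ≥ 2 be an integer and let G be a connected graph of order n. If d(u) + d(v) ≥ n − k + 1 for every two nonadjacent vertices u and v of G, then G has a spanning k-ended-tree. -/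
open Finset
open scoped Classical

lemma deg_add_edge {V : Type*} [Fintype V] (T : SimpleGraph V) (u w : V) (huw : u ≠ w)
    (hn : ¬ T.Adj u w) (z : V) :
    (T ⊔ SimpleGraph.edge u w).degree z =
      T.degree z + (if z = u then 1 else 0) + (if z = w then 1 else 0) := by
  have hn' : ¬ T.Adj w u := fun h => hn h.symm
  simp only [← SimpleGraph.card_neighborFinset_eq_degree]
  by_cases h1 : z = u
  · subst h1
    have : (T ⊔ SimpleGraph.edge z w).neighborFinset z = insert w (T.neighborFinset z) := by
      ext a
      simp [SimpleGraph.edge_adj]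
      grind
    rw [this, Finset.card_insert_of_notMem (by simpa using hn)]
    simp [huw]
  · by_cases h2 : z = w
    · subst h2
      have : (T ⊔ SimpleGraph.edge u z).neighborFinset z = insert u (T.neighborFinset z) := by
        ext a
        simp [SimpleGraph.edge_adj]
        grind
      rw [this, Finset.card_insert_of_notMem (by simpa using hn')]
      simp [h1]
    · have : (T ⊔ SimpleGraph.edge u w).neighborFinset z = T.neighborFinset z := by
        ext a
        simp [SimpleGraph.edge_adj]
        grind
      rw [this]
      simp [h1, h2]

/-- Exchange: add a non-edge, remove an edge on a cycle. -/
lemma exchange {V : Type*} [Fintype V] (T : SimpleGraph V) (hT : T.IsTree) (u w : V) (huw : u ≠ w)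
    (hn : ¬ T.Adj u w) (x y a : V) (c : (T ⊔ SimpleGraph.edge u w).Walk a a) (hc : c.IsCycle)
    (hxy : s(x, y) ∈ c.edges) :
    ∃ T' : SimpleGraph V, T' ≤ T ⊔ SimpleGraph.edge u w ∧ T'.IsTree ∧
      ∀ z, T'.degree z + (if z = x then 1 else 0) + (if z = y then 1 else 0) =
        T.degree z + (if z = u then 1 else 0) + (if z = w then 1 else 0) := by
  obtain ⟨H, hH⟩ : ∃ H, H = T ⊔ SimpleGraph.edge u w := ⟨_, rfl⟩
  rw [← hH]
  revert c
  rw [← hH]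
  intro c hc hxy
  have hadj : H.Adj x y := c.adj_of_mem_edges hxy
  have hHc : H.Connected := hH ▸ hT.1.mono le_sup_left
  refine ⟨H.deleteEdges {s(x, y)}, SimpleGraph.deleteEdges_le _, ?_⟩
  have hcon : (H.deleteEdges {s(x, y)}).Connected :=
    hHc.connected_delete_edge_of_not_isBridge (fun hb => hb.notMem_edges_of_isCycle hc hxy)
  have hback : H.deleteEdges {s(x, y)} ⊔ SimpleGraph.edge x y = H := by
    ext p q
    simp only [SimpleGraph.sup_adj, SimpleGraph.deleteEdges_adj, SimpleGraph.edge_adj,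
      Set.mem_singleton_iff, Sym2.eq_iff]
    have := hadj.symm
    have := hadj.ne
    grind
  have hDn : ¬ (H.deleteEdges {s(x, y)}).Adj x y := by simp
  generalize H.deleteEdges {s(x, y)} = D at *
  have hdeg : ∀ z, (D).degree z + (if z = x then 1 else 0)
      + (if z = y then 1 else 0) =
        T.degree z + (if z = u then 1 else 0) + (if z = w then 1 else 0) := by
    intro z
    rw [← deg_add_edge T u w huw hn z,
      ← deg_add_edge (D) x y hadj.ne hDn z]
    have e := hback.trans hH
    congr!
  refine ⟨?_, hdeg⟩
  rw [SimpleGraph.isTree_iff_connected_and_card]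
  refine ⟨hcon, ?_⟩
  have h1 := (SimpleGraph.isTree_iff_connected_and_card.1 hT).2
  have h2 := (D).sum_degrees_eq_twice_card_edges
  have h3 := T.sum_degrees_eq_twice_card_edges
  have h4 := Finset.sum_congr (rfl : (univ : Finset V) = univ) (fun z _ => hdeg z)
  simp only [Finset.sum_add_distrib, Finset.sum_ite_eq', Finset.mem_univ, if_true] at h4
  rw [Nat.card_eq_fintype_card, ← SimpleGraph.edgeFinset_card] at h1 ⊢
  omega

lemma exchange_le {V : Type*} {G T : SimpleGraph V} (h : T ≤ G) {u w : V} (huw : G.Adj u w) :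
    T ⊔ SimpleGraph.edge u w ≤ G := by
  intro p q hpq
  simp only [SimpleGraph.sup_adj, SimpleGraph.edge_adj] at hpq
  rcases hpq with h1 | ⟨⟨rfl, rfl⟩ | ⟨rfl, rfl⟩, _⟩
  · exact h h1
  · exact huw
  · exact huw.symm

noncomputable def lv {V : Type*} [Fintype V] (T : SimpleGraph V) : Finset V :=
  univ.filter fun v => T.degree v = 1

lemma mem_lv {V : Type*} [Fintype V] (T : SimpleGraph V) (v : V) : v ∈ lv T ↔ T.degree v = 1 := by
  simp [lv]

/-- A path in `T` closes up to a cycle. -/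
lemma path_cycle {V : Type*} (T : SimpleGraph V) (u w : V) (huw : u ≠ w)
    (hn : ¬ T.Adj u w) (p : T.Walk w u) (hp : p.IsPath) :
    ∃ c : (T ⊔ SimpleGraph.edge u w).Walk u u, c.IsCycle ∧ ∀ e ∈ p.edges, e ∈ c.edges := by
  have hadj : (T ⊔ SimpleGraph.edge u w).Adj u w := by simp [SimpleGraph.edge_adj, huw]
  refine ⟨SimpleGraph.Walk.cons hadj (p.mapLe le_sup_left), ?_, ?_⟩
  · rw [SimpleGraph.Walk.cons_isCycle_iff]
    refine ⟨by simpa using hp, ?_⟩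
    simp only [SimpleGraph.Walk.edges_mapLe_eq_edges]
    exact fun h => hn (p.adj_of_mem_edges h)
  · intro e he
    simp [he]

/-- In a tree with the minimum number of leaves (at least 3), leaves are independent. -/
lemma leaves_indep {V : Type*} [Fintype V] (G T : SimpleGraph V) (hTG : T ≤ G) (hT : T.IsTree)
    (hmin : ∀ T' : SimpleGraph V, T' ≤ G → T'.IsTree → (lv T).card ≤ (lv T').card)
    (h3 : 3 ≤ (lv T).card) (u v : V) (hu : u ∈ lv T) (hv : v ∈ lv T) : ¬ G.Adj u v := by
  intro hGuv
  have huv : u ≠ v := hGuv.ne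
  obtain ⟨z, hz, hzu, hzv⟩ : ∃ z ∈ lv T, z ≠ u ∧ z ≠ v := by
    by_contra! h
    have : lv T ⊆ {u, v} := fun z hz => by
      simp only [mem_insert, mem_singleton]
      by_cases hh : z = u
      · exact Or.inl hh
      · exact Or.inr (h z hz hh)
    have := Finset.card_le_card this
    have := Finset.card_le_two (a := u) (b := v)
    omega
  rw [mem_lv] at hu hv hz
  have hcH : (T ⊔ SimpleGraph.edge u v).Connected := hT.1.mono le_sup_left
  obtain ⟨p, hp⟩ := (hT.1.preconnected v u).exists_isPath
  -- u, v are not adjacent in `T`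
  have hn : ¬ T.Adj u v := by
    intro hadj
    have hun : ∀ b, T.Adj u b → b = v := by
      obtain ⟨b, hb⟩ := Finset.card_eq_one.1 (hu ▸ T.card_neighborFinset_eq_degree u)
      intro c hc
      have h1 : c ∈ T.neighborFinset u := by simpa using hc
      have h2 : v ∈ T.neighborFinset u := by simpa using hadj
      rw [hb] at h1 h2
      simp_all
    have hvn : ∀ b, T.Adj v b → b = u := by
      obtain ⟨b, hb⟩ := Finset.card_eq_one.1 (hv ▸ T.card_neighborFinset_eq_degree v)
      intro c hc
      have h1 : c ∈ T.neighborFinset v := by simpa using hc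
      have h2 : u ∈ T.neighborFinset v := by simpa using hadj.symm
      rw [hb] at h1 h2
      simp_all
    obtain ⟨q⟩ := hT.1.preconnected u z
    obtain ⟨d, -, hd1, hd2⟩ := q.exists_boundary_dart {u, v} (by simp) (by simp [hzu, hzv])
    have hda := d.adj
    simp only [Set.mem_insert_iff, Set.mem_singleton_iff] at hd1 hd2
    rcases hd1 with h | h
    · rw [h] at hda; exact hd2 (Or.inr (hun _ hda))
    · rw [h] at hda; exact hd2 (Or.inl (hvn _ hda))
  obtain ⟨c, hc, -⟩ := path_cycle T u v huv hn p hp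
  have hdH := deg_add_edge T u v huv hn
  have hsub : ∀ b, (c.toSubgraph.neighborSet b) ⊆
      ((T ⊔ SimpleGraph.edge u v).neighborFinset b : Set V) := by
    intro b x hx
    simpa using c.toSubgraph.neighborSet_subset b hx
  have hzc : z ∉ c.support := by
    intro hzc
    have h2 := hc.ncard_neighborSet_toSubgraph_eq_two hzc
    have h1 := Set.ncard_le_ncard (hsub z)
    rw [Set.ncard_coe_finset, SimpleGraph.card_neighborFinset_eq_degree, hdH z] at h1
    simp [hzu, hzv] at h1
    omega
  obtain ⟨q⟩ := hcH.preconnected u z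
  obtain ⟨d, -, hd1, hd2⟩ := q.exists_boundary_dart {x | x ∈ c.support} (by simp) hzc
  have hd1' : d.fst ∈ c.support := hd1
  have hd2' : d.snd ∉ c.support := hd2
  have h2 := hc.ncard_neighborSet_toSubgraph_eq_two hd1'
  have hdeg3 : 3 ≤ (T ⊔ SimpleGraph.edge u v).degree d.fst := by
    have hnot : d.snd ∉ c.toSubgraph.neighborSet d.fst := by
      intro h
      exact hd2' (c.mem_verts_toSubgraph.1 (c.toSubgraph.edge_vert h.symm))
    have h1 : (insert d.snd (c.toSubgraph.neighborSet d.fst)).ncard = 3 := by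
      rw [Set.ncard_insert_of_notMem hnot (Set.toFinite _), h2]
    have h4 : insert d.snd (c.toSubgraph.neighborSet d.fst) ⊆
        ((T ⊔ SimpleGraph.edge u v).neighborFinset d.fst : Set V) := by
      rw [Set.insert_subset_iff]
      exact ⟨by simpa using d.adj, hsub _⟩
    have h5 := Set.ncard_le_ncard h4
    rw [Set.ncard_coe_finset, SimpleGraph.card_neighborFinset_eq_degree] at h5
    omega
  obtain ⟨y, hy⟩ : (c.toSubgraph.neighborSet d.fst).Nonempty :=
    Set.nonempty_of_ncard_ne_zero (by omega)
  have hy' : s(d.fst, y) ∈ c.edges := by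
    rw [← SimpleGraph.Walk.mem_edges_toSubgraph]
    exact hy
  obtain ⟨T', hT'H, hT', hd'⟩ := exchange T hT u v huv hn d.fst y u c hc hy'
  have hm := hmin T' (hT'H.trans (exchange_le hTG hGuv)) hT'
  have hyne : d.fst ≠ y := (c.adj_of_mem_edges hy').ne
  have hss : lv T' ⊆ insert y ((lv T).erase u |>.erase v) := by
    intro b hb
    rw [mem_lv] at hb
    simp only [mem_insert, mem_erase, mem_lv]
    have hb' := hd' b
    by_cases hby : b = y
    · exact Or.inl hby
    right
    by_cases hbx : b = d.fst
    · rw [hdH] at hdeg3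
      rw [← hbx] at hdeg3
      simp only [hby, hbx.symm, if_true, if_false] at hb'
      simp at hb'
      omega
    · have hTb : 1 ≤ T.degree b := by
        have : Nontrivial V := ⟨⟨u, v, huv⟩⟩
        have := hT.1.preconnected.degree_pos_of_nontrivial b
        omega
      simp only [hby, hbx, if_false] at hb'
      refine ⟨?_, ?_, ?_⟩
      · rintro rfl; simp at hb'; omega
      · rintro rfl; simp at hb'; omega
      · split_ifs at hb' <;> omega
  have h6 := (Finset.card_le_card hss).trans (Finset.card_insert_le _ _)
  rw [Finset.card_erase_of_mem (by simp [mem_lv, hv, huv.symm]),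
    Finset.card_erase_of_mem (by simp [mem_lv, hu])] at h6
  omega

/-- parent function -/
lemma exists_parent_s12 {V : Type*} (T : SimpleGraph V) (hT : T.IsTree) (u : V) :
    ∃ f : V → V, ∀ w, w ≠ u → T.Adj w (f w) ∧ (T.Adj w u → f w = u) ∧
      (f w ≠ u → f (f w) ≠ w) ∧ ∃ p : T.Walk w u, p.IsPath ∧ s(w, f w) ∈ p.edges := by
  choose p hp using fun w => (hT.1.preconnected w u).exists_isPath
  have huniq : ∀ w (q : T.Walk w u), q.IsPath → q = p w := fun w q hq =>
    congrArg Subtype.val ((hT.2.subsingleton_path w u).elim ⟨q, hq⟩ ⟨p w, hp w⟩)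
  refine ⟨fun w => (p w).snd, fun w hw => ?_⟩
  have hpw := hp w
  have hu' := huniq w
  refine ⟨(p w).adj_snd (SimpleGraph.Walk.not_nil_of_ne hw), ?_, ?_, p w, hpw, ?_⟩
  · intro h
    change (p w).snd = u
    rw [← hu' h.toWalk (by simp [SimpleGraph.Walk.isPath_def, hw])]
    simp
  · intro hne
    cases hq : p w with
    | nil => exact absurd rfl hw
    | cons h q =>
      rw [hq] at hpw
      change (p (p w).snd).snd ≠ w
      have hs := congrArg SimpleGraph.Walk.snd hq
      rw [SimpleGraph.Walk.snd_cons] at hs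
      rw [hs]
      rw [SimpleGraph.Walk.cons_isPath_iff] at hpw
      rw [← huniq _ q hpw.1]
      intro he
      apply hpw.2
      rw [← he]
      exact q.getVert_mem_support 1
  · cases hq : p w with
    | nil => exact absurd rfl hw
    | cons h q =>
      have hs := congrArg SimpleGraph.Walk.snd hq
      rw [SimpleGraph.Walk.snd_cons] at hs
      simp [hs]

lemma key {V : Type*} [Fintype V] (G T : SimpleGraph V) (hTG : T ≤ G) (hT : T.IsTree)
    (hmin : ∀ T' : SimpleGraph V, T' ≤ G → T'.IsTree → (lv T).card ≤ (lv T').card)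
    (h3 : 3 ≤ (lv T).card) (u v : V) (huv : u ≠ v) (hu : u ∈ lv T) (hv : v ∈ lv T) :
    G.degree u + G.degree v + (lv T).card ≤ Fintype.card V + 1 := by
  have hind := leaves_indep G T hTG hT hmin h3
  obtain ⟨f, hf⟩ := exists_parent_s12 T hT u
  have hu1 := (mem_lv T u).1 hu
  have hv1 := (mem_lv T v).1 hv
  have : Nontrivial V := ⟨⟨u, v, huv⟩⟩
  have hpos : ∀ b, 1 ≤ T.degree b := fun b => hT.1.preconnected.degree_pos_of_nontrivial b
  have main : ∀ w, G.Adj u w → f w = u ∨ (T.degree (f w) = 2 ∧ ¬ G.Adj v (f w)) := by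
    intro w huw
    have hwu : w ≠ u := huw.ne.symm
    obtain ⟨hf1, hf2, -, p, hp, hpe⟩ := hf w hwu
    by_cases hadj : T.Adj u w
    · exact Or.inl (hf2 hadj.symm)
    by_cases hfu : f w = u
    · exact Or.inl hfu
    right
    obtain ⟨c, hc, hce⟩ := path_cycle T u w hwu.symm hadj p hp
    obtain ⟨T', hT'H, hT', hd'⟩ :=
      exchange T hT u w hwu.symm hadj w (f w) u c hc (hce _ hpe)
    have hT'G := hT'H.trans (exchange_le hTG huw)
    have hm := hmin T' hT'G hT'
    have hwl : w ∉ lv T := fun h => hind u w hu h huw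
    -- degrees
    have hdz : ∀ z, z ≠ u → z ≠ f w → T'.degree z = T.degree z := by
      intro z h1 h2
      have := hd' z
      simp only [h1, h2, if_false] at this
      omega
    have hdu : T'.degree u = 2 := by
      have := hd' u
      simp only [hwu.symm, Ne.symm hfu, if_false, if_true] at this
      omega
    have hdf : T'.degree (f w) + 1 = T.degree (f w) := by
      have := hd' (f w)
      simp only [hf1.ne.symm, hfu, if_false, if_true] at this
      omega
    have hpos' : 1 ≤ T'.degree (f w) := hT'.1.preconnected.degree_pos_of_nontrivial _
    have hf2' : T.degree (f w) = 2 := by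
      by_contra hne
      have hss : lv T' ⊆ (lv T).erase u := by
        intro b hb
        rw [mem_lv] at hb
        rw [mem_erase, mem_lv]
        have hbu : b ≠ u := by rintro rfl; omega
        have hbf : b ≠ f w := by rintro rfl; omega
        exact ⟨hbu, by rw [← hdz b hbu hbf]; exact hb⟩
      have := Finset.card_le_card hss
      rw [Finset.card_erase_of_mem hu] at this
      omega
    refine ⟨hf2', ?_⟩
    have hss : lv T' ⊆ insert (f w) ((lv T).erase u) := by
      intro b hb
      rw [mem_lv] at hb
      rw [mem_insert, mem_erase, mem_lv]
      have hbu : b ≠ u := by rintro rfl; omega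
      by_cases hbf : b = f w
      · exact Or.inl hbf
      · exact Or.inr ⟨hbu, by rw [← hdz b hbu hbf]; exact hb⟩
    have hle := (Finset.card_le_card hss).trans (Finset.card_insert_le _ _)
    rw [Finset.card_erase_of_mem hu] at hle
    have heq : (lv T').card = (lv T).card := by omega
    have hvf : v ≠ f w := by intro h; rw [← h] at hf2'; omega
    refine leaves_indep G T' hT'G hT' (fun S h1 h2 => heq ▸ hmin S h1 h2) (heq ▸ h3) v (f w) ?_ ?_
    · rw [mem_lv, hdz v huv.symm hvf, hv1]
    · rw [mem_lv]; omega
  have hinj : Set.InjOn f (G.neighborFinset u : Set V) := by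
    intro a ha b hb hab
    have ha' : G.Adj u a := by simpa using ha
    have hb' : G.Adj u b := by simpa using hb
    obtain ⟨ha1, -, ha3, -⟩ := hf a ha'.ne.symm
    obtain ⟨hb1, -, hb3, -⟩ := hf b hb'.ne.symm
    have am : a ∈ T.neighborFinset (f a) := by simpa using ha1.symm
    have bm : b ∈ T.neighborFinset (f a) := by rw [hab]; simpa using hb1.symm
    by_cases hfa : f a = u
    · have hc : (T.neighborFinset (f a)).card ≤ 1 := by
        rw [SimpleGraph.card_neighborFinset_eq_degree, hfa, hu1]
      exact Finset.card_le_one.1 hc a am b bm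
    · have hfa2 := ((main a ha').resolve_left hfa).1
      have hc : ((T.neighborFinset (f a)).erase (f (f a))).card ≤ 1 := by
        rw [Finset.card_erase_of_mem (by simpa using (hf (f a) hfa).1),
          SimpleGraph.card_neighborFinset_eq_degree, hfa2]
      refine Finset.card_le_one.1 hc a (mem_erase.2 ⟨(ha3 hfa).symm, am⟩) b
        (mem_erase.2 ⟨?_, bm⟩)
      rw [hab] at hfa ⊢
      exact (hb3 hfa).symm
  have hcard := Finset.card_image_of_injOn hinj
  rw [SimpleGraph.card_neighborFinset_eq_degree] at hcard
  have hd1 : Disjoint ((G.neighborFinset u).image f) (G.neighborFinset v) := by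
    rw [Finset.disjoint_left]
    intro b hb hbv
    obtain ⟨a, ha, rfl⟩ := mem_image.1 hb
    have ha' : G.Adj u a := by simpa using ha
    have hbv' : G.Adj v (f a) := by simpa using hbv
    rcases main a ha' with h | h
    · rw [h] at hbv'; exact hind v u hv hu hbv'
    · exact h.2 hbv'
  have hd2 : Disjoint ((G.neighborFinset u).image f ∪ G.neighborFinset v) ((lv T).erase u) := by
    rw [Finset.disjoint_left]
    intro b hb hbl
    obtain ⟨hbu, hbl⟩ := mem_erase.1 hbl
    rcases mem_union.1 hb with hb | hb
    · obtain ⟨a, ha, rfl⟩ := mem_image.1 hb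
      have ha' : G.Adj u a := by simpa using ha
      rcases main a ha' with h | h
      · exact hbu h
      · rw [mem_lv] at hbl; omega
    · exact hind v b hv hbl (by simpa using hb)
  have hfin := Finset.card_le_univ
    ((G.neighborFinset u).image f ∪ G.neighborFinset v ∪ (lv T).erase u)
  rw [Finset.card_union_of_disjoint hd2, Finset.card_union_of_disjoint hd1, hcard,
    SimpleGraph.card_neighborFinset_eq_degree, Finset.card_erase_of_mem hu] at hfin
  omega

/-- **Theorem (Broersma–Tuinstra).**  Let `k ≥ 2` and let `G` be a connected
graph of order `n`.  If `d(u) + d(v) ≥ n - k + 1` for every two distinct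
nonadjacent vertices `u` and `v`, then `G` has a spanning `k`-ended-tree. -/
theorem degree_sum_spanning_k_ended_tree {n k : ℕ} (hk : 2 ≤ k)
    (G : SimpleGraph (Fin n)) (hG : G.Connected)
    (hdeg : ∀ u v : Fin n, u ≠ v → ¬ G.Adj u v →
      (n : ℤ) - (k : ℤ) + 1 ≤ (G.degree u : ℤ) + (G.degree v : ℤ)) :
    HasSpanningKEndedTree G k := by
  obtain ⟨T₀, hT₀G, hT₀⟩ := hG.exists_isTree_le
  obtain ⟨T, hTm, hmin⟩ := Finset.exists_min_image
    (univ.filter fun T : SimpleGraph (Fin n) => T ≤ G ∧ T.IsTree) (fun T => (lv T).card)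
    ⟨T₀, by simp [hT₀G, hT₀]⟩
  obtain ⟨-, hTG, hT⟩ := mem_filter.1 hTm
  refine ⟨T, hTG, hT, ?_⟩
  change (lv T).card ≤ k
  by_contra hlt
  have hmin' : ∀ T' : SimpleGraph (Fin n), T' ≤ G → T'.IsTree → (lv T).card ≤ (lv T').card :=
    fun T' h1 h2 => hmin T' (mem_filter.2 ⟨mem_univ _, h1, h2⟩)
  have h3 : 3 ≤ (lv T).card := by omega
  obtain ⟨u, hu, v, hv, huv⟩ := Finset.one_lt_card.1 (show 1 < (lv T).card by omega)
  have hk1 := key G T hTG hT hmin' h3 u v huv hu hv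
  have hk2 := hdeg u v huv (leaves_indep G T hTG hT hmin' h3 u v hu hv)
  rw [Fintype.card_fin] at hk1
  have hk3 : ((G.degree u + G.degree v + (lv T).card : ℕ) : ℤ) ≤ ((n + 1 : ℕ) : ℤ) := by
    exact_mod_cast hk1
  push_cast at hk3
  omega
end
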